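/- Every normalized block sequence (x_n) of (e_i) has a subsequence (y_n) such that (y_n), (y_{2n})_{n∈ℕ} and (y_{2n+1})_{n∈ℕ} are mutually equivalent; consequently the closed linear span Y of (y_n) in S is isomorphic (linearly homeomorphic) to its square Y × Y (with the maximum norm). -/

import Mathlib

abbrev c00 : Type := ℕ →₀ ℝ

noncomputable def flog (x : ℝ) : ℝ := Real.logb 2 (x + 1)

noncomputable def supNorm (x : c00) : ℝ := ⨆ i, |x i|

def proj (E : Finset ℕ) (x : c00) : c00 := x.filter (· ∈ E)

def FLt (A B : Finset ℕ) : Prop := ∀ a ∈ A, ∀ b ∈ B, a < b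

def IsNormC00 (N : c00 → ℝ) : Prop :=
  (∀ x, N x = 0 ↔ x = 0) ∧ (∀ x y, N (x + y) ≤ N x + N y) ∧
    ∀ (a : ℝ) (x : c00), N (a • x) = |a| * N x

def schSet (N : c00 → ℝ) (x : c00) : Set ℝ :=
  {s | ∃ n : ℕ, 2 ≤ n ∧ ∃ E : Fin n → Finset ℕ,
    (∀ i j : Fin n, i < j → FLt (E i) (E j)) ∧
    s = (flog n)⁻¹ * ∑ i, N (proj (E i) x)}

def IsSchlumprechtNorm (N : c00 → ℝ) : Prop :=
  IsNormC00 N ∧ ∀ x : c00, IsLUB (insert (supNorm x) (schSet N x)) (N x)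

def IsBlockSeq (x : ℕ → c00) : Prop :=
  (∀ n, x n ≠ 0) ∧ ∀ n, ∀ i ∈ (x n).support, ∀ j ∈ (x (n+1)).support, i < j

def SeqEquiv (N : c00 → ℝ) (u v : ℕ → c00) : Prop :=
  ∃ c : ℝ, 1 ≤ c ∧ ∀ a : ℕ →₀ ℝ,
    (1 / c) * N (a.sum fun i t => t • u i) ≤ N (a.sum fun i t => t • v i) ∧
    N (a.sum fun i t => t • v i) ≤ c * N (a.sum fun i t => t • u i)

/-!
The norm of a linear combination of blocks is computed along a norming tree. Cutting the tree where
its nodes fit inside single blocks leaves a *configuration*: a value `∑ w ‖F x‖` with few sets `F`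
inside each block. If the combinations of two sequences of unit vectors are controlled by such
configurations and the `i`-th vectors of both have nearly the same norms on families of boundedly
many sets, then the sets can be exchanged one by one, and the sequences are equivalent. By
compactness of the possible norm profiles, an ultrafilter argument provides a subsequence `y` in
which *any* two vectors of index at least `i` match up to an error tending to zero fast; so `y` may
be compared with `y ∘ α` whenever `α i ≤ 2 i + 1`.

Expanding a node into an average of many pieces loses a constant factor at each level, which is
affordable only if most vectors of the combination have small averages of that length. Vectors with
a large `l`-average are *bad* for `l`. Either the averages of the vectors tend to zero along the
ultrafilter, and thresholds can be chosen so that at most one vector is bad for each `l`; or for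
some `θ > 0` arbitrarily long averages exceeding `θ` persist along the ultrafilter, and then
the coefficients of the few simultaneously bad vectors are dominated by these averages, at the cost
of `f(l²) ≤ 2 f(l)`.

The combinations of the even and of the odd terms have disjoint supports, so the norm of their sum
is comparable to the maximum of their norms; hence splitting the coefficients extends to an
isomorphism of `Y` with `Y × Y`.
-/

/-! ### The function `f` and the norm -/

theorem flog_mono {a b : ℝ} (ha : 0 ≤ a) (hab : a ≤ b) : flog a ≤ flog b :=
  Real.logb_le_logb_of_le (by norm_num) (by linarith) (by linarith)

theorem flog_natCast_mono {m n : ℕ} (h : m ≤ n) : flog m ≤ flog n :=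
  flog_mono m.cast_nonneg (by exact_mod_cast h)

theorem flog_one : flog 1 = 1 := by
  norm_num [flog]

theorem three_halves_le_flog {n : ℕ} (hn : 2 ≤ n) : 3 / 2 ≤ flog n := by
  have h8 : ((2 : ℝ) ^ (3 / 2 : ℝ)) ^ 2 = 8 := by
    rw [← Real.rpow_mul_natCast (by norm_num)]
    norm_num
  have h2 : 3 / 2 ≤ flog (2 : ℕ) := by
    rw [flog, Real.le_logb_iff_rpow_le (by norm_num) (by norm_num)]
    push_cast
    nlinarith
  exact h2.trans (flog_natCast_mono hn)

theorem flog_four_le : flog 4 ≤ 5 / 2 := by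
  have h32 : ((2 : ℝ) ^ (5 / 2 : ℝ)) ^ 2 = 32 := by
    rw [← Real.rpow_mul_natCast (by norm_num)]
    norm_num
  have hpos : (0 : ℝ) ≤ (2 : ℝ) ^ (5 / 2 : ℝ) := by positivity
  rw [flog, Real.logb_le_iff_le_rpow (by norm_num) (by norm_num)]
  nlinarith

theorem flog_nonneg (n : ℕ) : 0 ≤ flog n :=
  Real.logb_nonneg (by norm_num) (by simp)

theorem flog_pos {n : ℕ} (hn : 2 ≤ n) : 0 < flog n := by
  linarith [three_halves_le_flog hn]

theorem flog_mul_le (m n : ℕ) : flog (m * n : ℕ) ≤ flog m + flog n := by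
  unfold flog
  rw [← Real.logb_mul (by positivity) (by positivity)]
  refine Real.logb_le_logb_of_le (by norm_num) (by positivity) ?_
  push_cast
  nlinarith [m.cast_nonneg (α := ℝ), n.cast_nonneg (α := ℝ)]

theorem flog_pow_le (n k : ℕ) : flog (n ^ k : ℕ) ≤ 1 + k * flog n := by
  induction k with
  | zero => simp [flog_one]
  | succ k ih =>
    have := flog_mul_le (n ^ k) n
    rw [pow_succ]
    push_cast at *
    linarith

theorem tendsto_flog_natCast : Filter.Tendsto (fun n : ℕ => flog n) Filter.atTop Filter.atTop :=
  (Real.tendsto_logb_atTop (by norm_num)).comp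
    (Filter.tendsto_atTop_add_const_right _ _ tendsto_natCast_atTop_atTop)

theorem le_pow_four_of_flog_le {m n : ℕ} (h : flog m ≤ 4 * flog n) : m ≤ (n + 1) ^ 4 := by
  have hpow : 4 * flog n = Real.logb 2 (((n : ℝ) + 1) ^ 4) := by
    rw [flog, Real.logb_pow]
    norm_num
  rw [hpow, flog, Real.logb_le_logb (by norm_num) (by positivity) (by positivity)] at h
  have : m + 1 ≤ (n + 1) ^ 4 := by exact_mod_cast h
  omega

theorem proj_apply (E : Finset ℕ) (x : c00) (k : ℕ) : proj E x k = if k ∈ E then x k else 0 :=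
  Finsupp.filter_apply _ _ _

theorem proj_add (E : Finset ℕ) (x y : c00) : proj E (x + y) = proj E x + proj E y :=
  Finsupp.filter_add

theorem proj_smul (E : Finset ℕ) (t : ℝ) (x : c00) : proj E (t • x) = t • proj E x :=
  Finsupp.filter_smul

theorem proj_zero (E : Finset ℕ) : proj E 0 = 0 :=
  Finsupp.filter_zero _

theorem proj_sum {ι : Type*} (E : Finset ℕ) (s : Finset ι) (g : ι → c00) :
    proj E (∑ i ∈ s, g i) = ∑ i ∈ s, proj E (g i) :=
  map_sum (Finsupp.filterAddHom (· ∈ E)) g s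

theorem proj_proj (E F : Finset ℕ) (x : c00) : proj E (proj F x) = proj (E ∩ F) x := by
  ext k
  simp only [proj_apply, Finset.mem_inter, ite_and]

theorem proj_proj_of_subset {E F : Finset ℕ} (h : E ⊆ F) (x : c00) :
    proj E (proj F x) = proj E x := by
  rw [proj_proj, Finset.inter_eq_left.mpr h]

theorem proj_eq_self {E : Finset ℕ} {x : c00} (h : x.support ⊆ E) : proj E x = x :=
  (Finsupp.filter_eq_self_iff _ _).mpr fun _ hk => h (Finsupp.mem_support_iff.mpr hk)

theorem proj_eq_zero {E : Finset ℕ} {x : c00} (h : ∀ k ∈ E, x k = 0) : proj E x = 0 :=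
  (Finsupp.filter_eq_zero_iff _ _).mpr fun k hk => h k hk

theorem support_proj (E : Finset ℕ) (x : c00) : (proj E x).support = x.support.filter (· ∈ E) :=
  Finsupp.support_filter _ _

theorem proj_eq_sum_singleton (E : Finset ℕ) (x : c00) : proj E x = ∑ k ∈ E, proj {k} x := by
  ext j
  simp only [Finsupp.finsetSum_apply, proj_apply, Finset.mem_singleton, Finset.sum_ite_eq]

theorem bddAbove_range_abs (x : c00) : BddAbove (Set.range fun i => |x i|) :=
  (x.finite_range.image _).bddAbove.mono (Set.range_comp abs x).subset

theorem abs_le_supNorm (x : c00) (k : ℕ) : |x k| ≤ supNorm x :=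
  le_ciSup (bddAbove_range_abs x) k

theorem supNorm_proj_le (E : Finset ℕ) (x : c00) : supNorm (proj E x) ≤ supNorm x := by
  refine ciSup_le fun k => le_trans ?_ (abs_le_supNorm x k)
  rw [proj_apply]
  split_ifs <;> simp

theorem exists_abs_eq_supNorm {x : c00} (hx : x ≠ 0) : ∃ k ∈ x.support, |x k| = supNorm x := by
  obtain ⟨k, hk, hmax⟩ :=
    x.support.exists_max_image (fun k => |x k|) (Finsupp.support_nonempty_iff.mpr hx)
  refine ⟨k, hk, (abs_le_supNorm x k).antisymm (ciSup_le fun j => ?_)⟩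
  by_cases hj : j ∈ x.support
  · exact hmax j hj
  · simp [Finsupp.notMem_support_iff.mp hj]

namespace FLt

theorem mono {A B A' B' : Finset ℕ} (h : FLt A B) (hA : A' ⊆ A) (hB : B' ⊆ B) : FLt A' B' :=
  fun a ha b hb => h a (hA ha) b (hB hb)

theorem asymm {A B : Finset ℕ} (h : FLt A B) (hA : A.Nonempty) (hB : B.Nonempty) : ¬FLt B A := by
  obtain ⟨a, ha⟩ := hA
  obtain ⟨b, hb⟩ := hB
  exact fun h' => (h a ha b hb).asymm (h' b hb a ha)

theorem disjoint {A B : Finset ℕ} (h : FLt A B) : Disjoint A B :=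
  Finset.disjoint_left.mpr fun a ha hb => lt_irrefl a (h a ha a hb)

end FLt

/-- A successive family `E₁ < E₂ < ⋯` of finite sets, encoded as a list. -/
def IsSuccessive (L : List (Finset ℕ)) : Prop := L.Pairwise FLt

/-- The sum `∑ ‖E x‖` over the sets `E` of a family. -/
def normSum (N : c00 → ℝ) (L : List (Finset ℕ)) (x : c00) : ℝ :=
  (L.map fun E => N (proj E x)).sum

section normSum

variable {N : c00 → ℝ} {x y : c00}

theorem normSum_nil : normSum N [] x = 0 := rfl

theorem normSum_cons (E : Finset ℕ) (L : List (Finset ℕ)) :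
    normSum N (E :: L) x = N (proj E x) + normSum N L x :=
  List.sum_cons

theorem normSum_append (L L' : List (Finset ℕ)) :
    normSum N (L ++ L') x = normSum N L x + normSum N L' x := by
  simp [normSum]

theorem normSum_congr {L : List (Finset ℕ)} (h : ∀ E ∈ L, proj E x = proj E y) :
    normSum N L x = normSum N L y := by
  unfold normSum
  rw [List.map_congr_left fun E hE => by rw [h E hE]]

theorem normSum_map_inter (L : List (Finset ℕ)) (E : Finset ℕ) :
    normSum N (L.map (· ∩ E)) x = normSum N L (proj E x) := by
  simp only [normSum, List.map_map, Function.comp_def, proj_proj]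

end normSum

theorem IsSuccessive.map_inter {L : List (Finset ℕ)} (hL : IsSuccessive L) (E : Finset ℕ) :
    IsSuccessive (L.map (· ∩ E)) :=
  hL.map _ fun _ _ h => h.mono Finset.inter_subset_left Finset.inter_subset_left

theorem IsSuccessive.disjoint {L : List (Finset ℕ)} (hL : IsSuccessive L) :
    L.Pairwise Disjoint :=
  List.Pairwise.imp FLt.disjoint hL

theorem mem_schSet_iff {N : c00 → ℝ} {x : c00} {s : ℝ} :
    s ∈ schSet N x ↔ ∃ n : ℕ, 2 ≤ n ∧ ∃ L : List (Finset ℕ), L.length = n ∧ IsSuccessive L ∧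
      s = (flog n)⁻¹ * normSum N L x := by
  constructor
  · rintro ⟨n, hn, E, hE, rfl⟩
    exact ⟨n, hn, List.ofFn E, List.length_ofFn, List.pairwise_ofFn.mpr fun i j => hE i j, by
      rw [normSum, List.map_ofFn, List.sum_ofFn]; rfl⟩
  · rintro ⟨n, hn, L, rfl, hL, rfl⟩
    exact ⟨L.length, hn, L.get, fun i j => List.pairwise_iff_get.mp hL i j, by
      rw [normSum, ← List.ofFn_getElem_eq_map, List.sum_ofFn]; rfl⟩

namespace IsNormC00

variable {N : c00 → ℝ} (hN : IsNormC00 N)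

include hN

theorem map_zero : N 0 = 0 := (hN.1 0).mpr rfl

theorem add_le (x y : c00) : N (x + y) ≤ N x + N y := hN.2.1 x y

theorem map_smul (t : ℝ) (x : c00) : N (t • x) = |t| * N x := hN.2.2 t x

theorem nonneg (x : c00) : 0 ≤ N x := by
  have hadd := hN.add_le x ((-1 : ℝ) • x)
  have hneg := hN.map_smul (-1) x
  simp only [neg_smul, one_smul, add_neg_cancel, hN.map_zero, abs_neg, abs_one, one_mul]
    at hadd hneg
  linarith

theorem sum_le {ι : Type*} (s : Finset ι) (g : ι → c00) : N (∑ i ∈ s, g i) ≤ ∑ i ∈ s, N (g i) :=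
  Finset.le_sum_of_subadditive N hN.map_zero.le hN.add_le s g

theorem normSum_nonneg (L : List (Finset ℕ)) (x : c00) : 0 ≤ normSum N L x :=
  List.sum_nonneg fun t ht => by
    obtain ⟨E, -, rfl⟩ := List.mem_map.mp ht
    exact hN.nonneg _

theorem normSum_add_le (L : List (Finset ℕ)) (x y : c00) :
    normSum N L (x + y) ≤ normSum N L x + normSum N L y := by
  simp only [normSum, proj_add, ← List.sum_map_add]
  exact List.sum_le_sum fun E _ => hN.add_le _ _

theorem normSum_sum_smul_le {ι : Type*} (L : List (Finset ℕ)) (s : Finset ι) (a : ι → ℝ)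
    (u : ι → c00) :
    normSum N L (∑ i ∈ s, a i • u i) ≤ ∑ i ∈ s, |a i| * normSum N L (u i) := by
  induction L with
  | nil => simp [normSum_nil]
  | cons E L ih =>
    simp only [normSum_cons, mul_add, Finset.sum_add_distrib]
    refine add_le_add ?_ ih
    rw [proj_sum]
    refine (hN.sum_le _ _).trans_eq (Finset.sum_congr rfl fun i _ => ?_)
    rw [proj_smul, hN.map_smul]

theorem normSum_smul (L : List (Finset ℕ)) (t : ℝ) (x : c00) :
    normSum N L (t • x) = |t| * normSum N L x := by
  simp only [normSum, proj_smul, hN.map_smul, List.sum_map_mul_left]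

theorem normSum_filter_nonempty (L : List (Finset ℕ)) (x : c00) :
    normSum N (L.filter (·.Nonempty)) x = normSum N L x := by
  induction L with
  | nil => rfl
  | cons F L ih =>
    rcases F.eq_empty_or_nonempty with rfl | hF
    · simp [normSum_cons, ih, proj_eq_zero (E := ∅) (x := x) (by simp), hN.map_zero]
    · simp [normSum_cons, ih, hF]

end IsNormC00

namespace IsSchlumprechtNorm

variable {N : c00 → ℝ} (hN : IsSchlumprechtNorm N)

include hN

theorem supNorm_le (x : c00) : supNorm x ≤ N x := (hN.2 x).1 (Set.mem_insert _ _)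

theorem abs_apply_le (x : c00) (k : ℕ) : |x k| ≤ N x :=
  (abs_le_supNorm x k).trans (hN.supNorm_le x)

theorem normSum_le {n : ℕ} (hn : 2 ≤ n) {L : List (Finset ℕ)} (hL : IsSuccessive L)
    (hlen : L.length ≤ n) (x : c00) : normSum N L x ≤ flog n * N x := by
  have hpad : IsSuccessive (L ++ List.replicate (n - L.length) ∅) :=
    List.pairwise_append.mpr ⟨hL, List.pairwise_replicate.mpr (Or.inr fun a ha => by simp at ha),
      fun E _ F hF a _ b hb => by simp [List.eq_of_mem_replicate hF] at hb⟩
  have hle := (hN.2 x).1 (Set.mem_insert_of_mem _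
    (mem_schSet_iff.mpr ⟨n, hn, _, by simp [hlen], hpad, rfl⟩))
  rw [inv_mul_le_iff₀ (flog_pos hn), normSum_append] at hle
  linarith [hN.1.normSum_nonneg (List.replicate (n - L.length) ∅) x]

theorem map_proj_le (E : Finset ℕ) (x : c00) : N (proj E x) ≤ N x := by
  refine (hN.2 (proj E x)).2 ?_
  rintro s (rfl | hs)
  · exact (supNorm_proj_le E x).trans (hN.supNorm_le x)
  · obtain ⟨n, hn, L, hlen, hL, rfl⟩ := mem_schSet_iff.mp hs
    rw [inv_mul_le_iff₀ (flog_pos hn), ← normSum_map_inter]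
    exact hN.normSum_le hn (hL.map_inter E) (by simp [hlen]) x

theorem normSum_le_of_subset {n : ℕ} (hn : 2 ≤ n) {L : List (Finset ℕ)} (hL : IsSuccessive L)
    (hlen : L.length ≤ n) {E : Finset ℕ} (hLE : ∀ F ∈ L, F ⊆ E) (x : c00) :
    normSum N L x ≤ flog n * N (proj E x) := by
  rw [← normSum_congr fun F hF => proj_proj_of_subset (hLE F hF) x]
  exact hN.normSum_le hn hL hlen _

theorem normSum_le_sum_singleton {L : List (Finset ℕ)} (hL : IsSuccessive L) (x : c00) :
    normSum N L x ≤ ∑ k ∈ x.support, N (proj {k} x) := by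
  have key : ∀ S : Finset ℕ, normSum N L (proj S x) ≤ ∑ k ∈ S, N (proj {k} x) := by
    induction L with
    | nil => exact fun S => Finset.sum_nonneg fun k _ => hN.1.nonneg _
    | cons E L ih =>
      intro S
      have hE : N (proj E (proj S x)) ≤ ∑ k ∈ S ∩ E, N (proj {k} x) := by
        rw [proj_proj, Finset.inter_comm, proj_eq_sum_singleton]
        exact hN.1.sum_le _ _
      have hrest : normSum N L (proj S x) = normSum N L (proj (S \ E) x) := by
        refine normSum_congr fun F hF => ?_
        have hdisj := List.rel_of_pairwise_cons hL.disjoint hF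
        rw [proj_proj, proj_proj, ← Finset.inter_sdiff_assoc, Finset.sdiff_eq_self_of_disjoint
          (hdisj.symm.mono_left Finset.inter_subset_left)]
      rw [normSum_cons, hrest, ← Finset.sum_inter_add_sum_sdiff S E]
      exact add_le_add hE (ih hL.of_cons _)
  simpa only [proj_eq_self subset_rfl] using key x.support

/-- Only finitely many families matter for values above `c > 0`: the bound `‖x‖_{ℓ¹}/f(n)` limits
the number of sets, and the sets may be taken inside the support. -/
theorem finite_schSet_inter_Ici (x : c00) {c : ℝ} (hc : 0 < c) :
    (schSet N x ∩ Set.Ici c).Finite := by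
  obtain ⟨n₀, hn₀⟩ := Filter.eventually_atTop.mp
    (tendsto_flog_natCast.eventually_gt_atTop ((∑ k ∈ x.support, N (proj {k} x)) / c))
  refine Set.Finite.subset ((Set.finite_Iic n₀).biUnion fun n _ =>
    ((List.finite_length_eq {E // E ∈ x.support.powerset} n).image
      fun L => (flog n)⁻¹ * normSum N (L.map (↑)) x)) ?_
  rintro s ⟨hs, hcs⟩
  obtain ⟨n, hn, L, hlen, hL, rfl⟩ := mem_schSet_iff.mp hs
  refine Set.mem_biUnion (x := n) ?_
    ⟨L.map fun E => ⟨E ∩ x.support, Finset.mem_powerset.mpr Finset.inter_subset_right⟩, ?_, ?_⟩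
  · by_contra hlt
    have hbound := hn₀ n (not_le.mp hlt).le
    rw [div_lt_iff₀ hc] at hbound
    rw [Set.mem_Ici, le_inv_mul_iff₀ (flog_pos hn)] at hcs
    linarith [hN.normSum_le_sum_singleton hL x]
  · simpa using hlen
  · simp only [List.map_map, Function.comp_def]
    rw [normSum_map_inter, proj_eq_self subset_rfl]

theorem mem_schSet_of_supNorm_lt {x : c00} (hx : supNorm x < N x) : N x ∈ schSet N x := by
  have hpos : 0 < N x := ((abs_nonneg _).trans (abs_le_supNorm x 0)).trans_lt hx
  obtain ⟨c, hcS, hc, -⟩ := (hN.2 x).exists_between (max_lt hx (half_lt_self hpos))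
  have hc0 : 0 < c := (half_pos hpos).trans ((le_max_right _ _).trans_lt hc)
  have hsub : insert (supNorm x) (schSet N x) ∩ Set.Ici c ⊆ schSet N x ∩ Set.Ici c := by
    rintro s ⟨rfl | hs, hcs⟩
    · exact absurd ((le_max_left _ _).trans_lt hc) (not_lt.mpr hcs)
    · exact ⟨hs, hcs⟩
  exact (hsub (((hN.2 x).inter_Ici_of_mem hcS).mem_of_isClosed ⟨c, hcS, Set.self_mem_Ici⟩
    ((hN.finite_schSet_inter_Ici x hc0).subset hsub).isClosed)).1

theorem normSum_le_of_support_subset {L : List (Finset ℕ)} (hL : IsSuccessive L) {E : Finset ℕ}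
    (hE : E ∈ L) {x : c00} (hx : x.support ⊆ E) : normSum N L x ≤ N x := by
  have hvanish : ∀ L' : List (Finset ℕ), (∀ F ∈ L', Disjoint F E) → normSum N L' x = 0 := by
    refine fun L' hL' => List.sum_eq_zero fun t ht => ?_
    obtain ⟨F, hF, rfl⟩ := List.mem_map.mp ht
    rw [proj_eq_zero fun k hk => ?_, hN.1.map_zero]
    by_contra hxk
    exact Finset.disjoint_left.mp (hL' F hF) hk (hx (Finsupp.mem_support_iff.mpr hxk))
  obtain ⟨L₁, L₂, rfl⟩ := List.append_of_mem hE
  have hdisj := List.pairwise_append.mp hL.disjoint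
  rw [normSum_append, normSum_cons, hvanish L₁ fun F hF => hdisj.2.2 F hF E List.mem_cons_self,
    hvanish L₂ fun F hF => (List.rel_of_pairwise_cons hdisj.2.1 hF).symm]
  linarith [hN.map_proj_le E x]

/-- If one set of the family contained the support, the sum would be at most `N x / f n < N x`. -/
theorem exists_isSuccessive_ssubset {x : c00} (hx : supNorm x < N x) :
    ∃ n : ℕ, 2 ≤ n ∧ ∃ L : List (Finset ℕ), L.length ≤ n ∧ IsSuccessive L ∧
      (∀ E ∈ L, E ⊂ x.support) ∧ N x = (flog n)⁻¹ * normSum N L x := by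
  obtain ⟨n, hn, L, hlen, hL, hval⟩ := mem_schSet_iff.mp (hN.mem_schSet_of_supNorm_lt hx)
  refine ⟨n, hn, L.map (· ∩ x.support), by simp [hlen], hL.map_inter _, ?_, ?_⟩
  · intro E' hE'
    obtain ⟨E, hE, rfl⟩ := List.mem_map.mp hE'
    refine lt_of_le_of_ne Finset.inter_subset_right fun hsupp => ?_
    have hle := hN.normSum_le_of_support_subset hL hE (Finset.inter_eq_right.mp hsupp)
    have hpos : 0 < N x := ((abs_nonneg _).trans (abs_le_supNorm x 0)).trans_lt hx
    rw [eq_inv_mul_iff_mul_eq₀ (flog_pos hn).ne'] at hval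
    nlinarith [three_halves_le_flog hn]
  · rw [normSum_map_inter, proj_eq_self subset_rfl, hval]

end IsSchlumprechtNorm

/-! ### Configurations -/

/-- A weighted family of finite sets, encoding the functional-like expression `∑ w ‖F x‖`. -/
abbrev Config : Type := List (Finset ℕ × ℝ)

namespace Config

/-- The sets of a configuration. -/
def sets (c : Config) : List (Finset ℕ) := c.map Prod.fst

/-- The weights of a configuration. -/
def weights (c : Config) : List ℝ := c.map Prod.snd

/-- The value `∑ w ‖F x‖` of a configuration at `x`. -/
def value (N : c00 → ℝ) (c : Config) (x : c00) : ℝ := (c.map fun k => k.2 * N (proj k.1 x)).sum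

/-- The configuration with all weights multiplied by `t`. -/
def scale (t : ℝ) (c : Config) : Config := c.map fun k => (k.1, t * k.2)

section

variable {N : c00 → ℝ} {x : c00} (c c' : Config)

theorem sets_append : (c ++ c').sets = c.sets ++ c'.sets := List.map_append

theorem weights_append : (c ++ c').weights = c.weights ++ c'.weights := List.map_append

theorem value_nil : value N [] x = 0 := rfl

theorem value_cons (k : Finset ℕ × ℝ) :
    value N (k :: c) x = k.2 * N (proj k.1 x) + value N c x :=
  List.sum_cons

theorem value_singleton (E : Finset ℕ) (w : ℝ) : value N [(E, w)] x = w * N (proj E x) := by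
  simp [value]

theorem value_append : value N (c ++ c') x = value N c x + value N c' x := by
  simp [value]

theorem value_flatMap {ι : Type*} (L : List ι) (g : ι → Config) :
    value N (L.flatMap g) x = (L.map fun i => value N (g i) x).sum := by
  induction L with
  | nil => rfl
  | cons i L ih => rw [List.flatMap_cons, value_append, ih, List.map_cons, List.sum_cons]

theorem sets_scale (t : ℝ) : (c.scale t).sets = c.sets := by
  simp [sets, scale, Function.comp_def]

theorem weights_scale (t : ℝ) : (c.scale t).weights = c.weights.map (t * ·) := by
  simp [weights, scale, Function.comp_def]

theorem value_scale (t : ℝ) : value N (c.scale t) x = t * value N c x := by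
  simp only [value, scale, List.map_map, ← List.sum_map_mul_left, Function.comp_def, mul_assoc]

theorem value_nonneg {c : Config} (hN : IsNormC00 N) (hc : ∀ w ∈ c.weights, 0 ≤ w) :
    0 ≤ value N c x := by
  refine List.sum_nonneg fun t ht => ?_
  obtain ⟨k, hk, rfl⟩ := List.mem_map.mp ht
  exact mul_nonneg (hc _ (List.mem_map_of_mem hk)) (hN.nonneg _)

theorem eq_nil_of_weights_eq_nil {c : Config} (h : c.weights = []) : c = [] :=
  List.map_eq_nil_iff.mp h

end

/-- A list `w` of weights is admissible with constant `C` and `n` pieces if every configuration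
carrying these weights on successive sets is dominated by `C ∑ ‖E x‖`, over at most `n` successive
sets `E` contained in the union of the sets of the configuration. -/
def IsAdmissible (N : c00 → ℝ) (C : ℝ) (n : ℕ) (w : List ℝ) : Prop :=
  ∀ c : Config, c.weights = w → IsSuccessive c.sets →
    ∃ L : List (Finset ℕ), IsSuccessive L ∧ L.length ≤ n ∧
      (∀ E ∈ L, ∀ k ∈ E, ∃ F ∈ c.sets, k ∈ F) ∧ ∀ x, value N c x ≤ C * normSum N L x

namespace IsAdmissible

variable {N : c00 → ℝ} {C : ℝ} {m n : ℕ} {v w : List ℝ}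

theorem mono (h : IsAdmissible N C m w) (hmn : m ≤ n) : IsAdmissible N C n w := by
  intro c hcw hc
  obtain ⟨L, hL, hlen, hsub, hval⟩ := h c hcw hc
  exact ⟨L, hL, hlen.trans hmn, hsub, hval⟩

theorem nil : IsAdmissible N C n [] := by
  intro c hcw _
  rw [eq_nil_of_weights_eq_nil hcw]
  exact ⟨[], List.Pairwise.nil, n.zero_le, by simp, fun x => by simp [value_nil, normSum_nil]⟩

theorem singleton (hN : IsNormC00 N) {t : ℝ} (ht : t ≤ C) : IsAdmissible N C 1 [t] := by
  intro c hcw _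
  obtain ⟨⟨E, s⟩, rfl, rfl⟩ := List.map_eq_singleton_iff.mp hcw
  refine ⟨[E], List.pairwise_singleton _ _, le_rfl, by simp [sets], fun x => ?_⟩
  rw [value_singleton, normSum_cons, normSum_nil, add_zero]
  exact mul_le_mul_of_nonneg_right ht (hN.nonneg _)

theorem append (hv : IsAdmissible N C m v) (hw : IsAdmissible N C n w) :
    IsAdmissible N C (m + n) (v ++ w) := by
  intro c hcw hc
  obtain ⟨c₁, c₂, rfl, hc₁, hc₂⟩ := List.map_eq_append_iff.mp hcw
  rw [sets_append] at hc ⊢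
  obtain ⟨hs₁, hs₂, hs⟩ := List.pairwise_append.mp hc
  obtain ⟨L₁, hL₁, hlen₁, hsub₁, hval₁⟩ := hv c₁ hc₁ hs₁
  obtain ⟨L₂, hL₂, hlen₂, hsub₂, hval₂⟩ := hw c₂ hc₂ hs₂
  refine ⟨L₁ ++ L₂, List.pairwise_append.mpr ⟨hL₁, hL₂, fun E hE F hF k hk j hj => ?_⟩, ?_, ?_, ?_⟩
  · obtain ⟨E', hE', hkE'⟩ := hsub₁ E hE k hk
    obtain ⟨F', hF', hjF'⟩ := hsub₂ F hF j hj
    exact hs E' hE' F' hF' k hkE' j hjF'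
  · rw [List.length_append]
    exact add_le_add hlen₁ hlen₂
  · simp only [List.mem_append]
    rintro E (hE | hE) k hk
    · obtain ⟨F, hF, hkF⟩ := hsub₁ E hE k hk
      exact ⟨F, .inl hF, hkF⟩
    · obtain ⟨F, hF, hkF⟩ := hsub₂ E hE k hk
      exact ⟨F, .inr hF, hkF⟩
  · intro x
    rw [value_append, normSum_append, mul_add]
    exact add_le_add (hval₁ x) (hval₂ x)

theorem replicate (hN : IsNormC00 N) {t : ℝ} (ht : t ≤ C) (n : ℕ) :
    IsAdmissible N C n (List.replicate n t) := by
  induction n with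
  | zero => exact nil
  | succ n ih =>
    rw [List.replicate_succ']
    exact ih.append (singleton hN ht)

theorem scale (hN : IsSchlumprechtNorm N) (hC : 0 ≤ C) (hn : 2 ≤ n) (hw : IsAdmissible N C n w) :
    IsAdmissible N C 1 (w.map ((flog n)⁻¹ * ·)) := by
  intro c hcw hc
  have hf := flog_pos hn
  obtain ⟨L, hL, hlen, hsub, hval⟩ := hw (c.scale (flog n))
    (by simp [weights_scale, hcw, Function.comp_def, hf.ne']) (by rwa [sets_scale])
  refine ⟨[L.toFinset.biUnion id], List.pairwise_singleton _ _, le_rfl, ?_, fun x => ?_⟩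
  · intro E hE k hk
    rw [List.mem_singleton.mp hE] at hk
    obtain ⟨F, hF, hkF⟩ := Finset.mem_biUnion.mp hk
    simpa only [sets_scale] using hsub F (List.mem_toFinset.mp hF) k hkF
  · have hle := hN.normSum_le_of_subset hn hL hlen (fun E hE =>
      Finset.subset_biUnion_of_mem id (List.mem_toFinset.mpr hE)) x
    have hvalx := hval x
    rw [value_scale] at hvalx
    rw [normSum_cons, normSum_nil, add_zero]
    nlinarith

/-- Test the estimate on a unit vector, with all other sets empty. -/
theorem weight_le (hN : IsSchlumprechtNorm N) (hC : 0 ≤ C) (hw : IsAdmissible N C n w) {t : ℝ}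
    (ht : t ∈ w) : t ≤ C := by
  obtain ⟨w₁, w₂, rfl⟩ := List.append_of_mem ht
  let emptyOn (v : List ℝ) : Config := v.map fun s => (∅, s)
  have hsets (v : List ℝ) : (emptyOn v).sets = List.replicate v.length ∅ := by
    simp [emptyOn, sets, Function.comp_def]
  have hweights (v : List ℝ) : (emptyOn v).weights = v := by
    simp [emptyOn, weights, Function.comp_def]
  have hvalue (v : List ℝ) (x : c00) : value N (emptyOn v) x = 0 := by
    have hproj : proj ∅ x = 0 := proj_eq_zero (by simp)
    simp [emptyOn, value, Function.comp_def, hproj, hN.1.map_zero]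
  obtain ⟨L, hL, -, -, hval⟩ := hw (emptyOn w₁ ++ ({0}, t) :: emptyOn w₂)
    (by rw [weights_append, hweights]; exact congrArg (w₁ ++ t :: ·) (hweights w₂)) (by
      rw [sets_append, hsets,
        show sets (({0}, t) :: emptyOn w₂) = {0} :: sets (emptyOn w₂) from rfl, hsets]
      simp [IsSuccessive, List.pairwise_append, List.pairwise_replicate, FLt])
  let e : c00 := Finsupp.single 0 1
  have he : proj {0} e = e := proj_eq_self (by simp [e])
  have hpos : 0 < N e :=
    (hN.1.nonneg e).lt_of_ne' fun h => one_ne_zero (Finsupp.single_eq_zero.mp ((hN.1.1 e).mp h))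
  have hsum : normSum N L e ≤ N e := by
    have := hN.normSum_le_sum_singleton hL e
    rwa [Finsupp.support_single _ one_ne_zero, Finset.sum_singleton, he] at this
  have hvale := hval e
  rw [value_append, value_cons, hvalue, hvalue, he] at hvale
  exact le_of_mul_le_mul_right (by nlinarith) hpos

end IsAdmissible

end Config

/-- The `i`-th of the consecutive intervals `[p i, p (i + 1))`. -/
def block (p : ℕ → ℕ) (i : ℕ) : Finset ℕ := Finset.Ico (p i) (p (i + 1))

theorem mem_block {p : ℕ → ℕ} {i k : ℕ} : k ∈ block p i ↔ p i ≤ k ∧ k < p (i + 1) := Finset.mem_Ico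

theorem block_FLt_block {p : ℕ → ℕ} (hp : Monotone p) {i j : ℕ} (hij : i < j) :
    FLt (block p i) (block p j) :=
  fun _ ha _ hb => (mem_block.mp ha).2.trans_le ((hp hij).trans (mem_block.mp hb).1)

theorem eq_of_mem_block {p : ℕ → ℕ} (hp : Monotone p) {i j k : ℕ} (hi : k ∈ block p i)
    (hj : k ∈ block p j) : i = j := by
  rcases lt_trichotomy i j with h | h | h
  · exact absurd (block_FLt_block hp h k hi k hj) (lt_irrefl k)
  · exact h
  · exact absurd (block_FLt_block hp h k hj k hi) (lt_irrefl k)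

/-- `F` lies in the interval spanned by `E`. -/
def InHull (F E : Finset ℕ) : Prop := ∀ k ∈ F, (∃ a ∈ E, a ≤ k) ∧ ∃ b ∈ E, k ≤ b

namespace InHull

variable {E E' F F' : Finset ℕ}

theorem of_subset (h : F ⊆ E) : InHull F E :=
  fun k hk => ⟨⟨k, h hk, le_rfl⟩, ⟨k, h hk, le_rfl⟩⟩

theorem mono (h : InHull F E) (hE : E ⊆ E') : InHull F E' :=
  fun k hk => (h k hk).imp (Exists.imp fun _ => And.imp_left (@hE _))
    (Exists.imp fun _ => And.imp_left (@hE _))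

theorem flt (hF : InHull F E) (hF' : InHull F' E') (h : FLt E E') : FLt F F' := by
  intro k hk k' hk'
  obtain ⟨b, hb, hkb⟩ := (hF k hk).2
  obtain ⟨a, ha, hak'⟩ := (hF' k' hk').1
  exact hkb.trans_lt ((h b hb a ha).trans_le hak')

end InHull

namespace Config

/-- The number of sets of a configuration inside the `i`-th block. -/
def count (p : ℕ → ℕ) (i : ℕ) (c : Config) : ℕ := c.sets.countP fun F => F ⊆ block p i

/-- An admissible configuration of successive nonempty sets in the hull of `E`, each one inside some
block with index in `A`, with at most `b i` of them inside the `i`-th block. -/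
structure IsControlled (N : c00 → ℝ) (C : ℝ) (p : ℕ → ℕ) (A E : Finset ℕ) (b : ℕ → ℕ) (n : ℕ)
    (c : Config) : Prop where
  isAdmissible : IsAdmissible N C n c.weights
  isSuccessive : IsSuccessive c.sets
  weight_nonneg : ∀ w ∈ c.weights, 0 ≤ w
  nonempty : ∀ F ∈ c.sets, F.Nonempty
  inHull : ∀ F ∈ c.sets, InHull F E
  subset_block : ∀ F ∈ c.sets, ∃ i ∈ A, F ⊆ block p i
  count_le : ∀ i ∈ A, c.count p i ≤ b i

namespace IsControlled

variable {N : c00 → ℝ} {C : ℝ} {p : ℕ → ℕ} {A A' E E' : Finset ℕ} {b b' : ℕ → ℕ} {m n : ℕ}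
  {c c' : Config}

theorem value_nonneg (h : IsControlled N C p A E b n c) (hN : IsNormC00 N) (x : c00) :
    0 ≤ value N c x :=
  Config.value_nonneg hN h.weight_nonneg

theorem nil : IsControlled N C p A E b n [] where
  isAdmissible := .nil
  isSuccessive := List.Pairwise.nil
  weight_nonneg := by simp [weights]
  nonempty := by simp [sets]
  inHull := by simp [sets]
  subset_block := by simp [sets]
  count_le := by simp [count, sets]

theorem singleton (hN : IsNormC00 N) (hC : 1 ≤ C) (hp : Monotone p) {F : Finset ℕ}
    (hF : F.Nonempty) (hFE : F ⊆ E) {i : ℕ} (hi : i ∈ A) (hFi : F ⊆ block p i) (hb : 1 ≤ b i) :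
    IsControlled N C p A E b 1 [(F, 1)] where
  isAdmissible := .singleton hN hC
  isSuccessive := List.pairwise_singleton _ _
  weight_nonneg := by simp [weights]
  nonempty := by simpa [sets]
  inHull := by simpa [sets] using InHull.of_subset hFE
  subset_block := by simpa [sets] using ⟨i, hi, hFi⟩
  count_le j _ := by
    by_cases hFj : F ⊆ block p j
    · obtain ⟨k, hk⟩ := hF
      obtain rfl := eq_of_mem_block hp (hFj hk) (hFi hk)
      simpa [count, sets, hFi] using hb
    · simp [count, sets, hFj]

theorem count_eq_zero (h : IsControlled N C p A E b n c) (hp : Monotone p) {i : ℕ} (hi : i ∉ A) :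
    c.count p i = 0 := by
  refine List.countP_eq_zero.mpr fun F hF hFi => hi ?_
  obtain ⟨j, hj, hFj⟩ := h.subset_block F hF
  obtain ⟨k, hk⟩ := h.nonempty F hF
  rwa [eq_of_mem_block hp (of_decide_eq_true hFi hk) (hFj hk)]

theorem mono (h : IsControlled N C p A E b m c) (hp : Monotone p) (hA : A ⊆ A')
    (hE : ∀ F ∈ c.sets, InHull F E') (hb : ∀ i ∈ A, b i ≤ b' i) (hmn : m ≤ n) :
    IsControlled N C p A' E' b' n c where
  isAdmissible := h.isAdmissible.mono hmn
  isSuccessive := h.isSuccessive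
  weight_nonneg := h.weight_nonneg
  nonempty := h.nonempty
  inHull := hE
  subset_block F hF := (h.subset_block F hF).imp fun i => And.imp_left (@hA i)
  count_le i _ := by
    by_cases hi : i ∈ A
    · exact (h.count_le i hi).trans (hb i hi)
    · exact (h.count_eq_zero hp hi).trans_le (Nat.zero_le _)

theorem append (h : IsControlled N C p A E b m c) (h' : IsControlled N C p A' E b' n c')
    {b'' : ℕ → ℕ} (hcc' : ∀ F ∈ c.sets, ∀ F' ∈ c'.sets, FLt F F')
    (hb : ∀ i ∈ A ∪ A', c.count p i + c'.count p i ≤ b'' i) :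
    IsControlled N C p (A ∪ A') E b'' (m + n) (c ++ c') where
  isAdmissible := by
    rw [weights_append]
    exact h.isAdmissible.append h'.isAdmissible
  isSuccessive := by
    rw [sets_append]
    exact List.pairwise_append.mpr ⟨h.isSuccessive, h'.isSuccessive, hcc'⟩
  weight_nonneg := by
    simpa only [weights_append] using
      List.forall_mem_append.mpr ⟨h.weight_nonneg, h'.weight_nonneg⟩
  nonempty := by
    simpa only [sets_append] using List.forall_mem_append.mpr ⟨h.nonempty, h'.nonempty⟩
  inHull := by
    simpa only [sets_append] using List.forall_mem_append.mpr ⟨h.inHull, h'.inHull⟩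
  subset_block := by
    rw [sets_append]
    refine List.forall_mem_append.mpr ⟨fun F hF => ?_, fun F hF => ?_⟩
    · obtain ⟨i, hi, hFi⟩ := h.subset_block F hF
      exact ⟨i, Finset.mem_union_left _ hi, hFi⟩
    · obtain ⟨i, hi, hFi⟩ := h'.subset_block F hF
      exact ⟨i, Finset.mem_union_right _ hi, hFi⟩
  count_le i hi := by
    rw [count, sets_append, List.countP_append]
    exact hb i hi

theorem append_of_lt (h : IsControlled N C p A E b m c) (h' : IsControlled N C p A' E b n c')
    (hp : Monotone p) (hlt : ∀ i ∈ A, ∀ j ∈ A', i < j) :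
    IsControlled N C p (A ∪ A') E b (m + n) (c ++ c') := by
  refine h.append h' (fun F hF F' hF' => ?_) fun i hi => ?_
  · obtain ⟨i, hi, hFi⟩ := h.subset_block F hF
    obtain ⟨j, hj, hFj⟩ := h'.subset_block F' hF'
    exact (block_FLt_block hp (hlt i hi j hj)).mono hFi hFj
  · rcases Finset.mem_union.mp hi with hi | hi
    · rw [h'.count_eq_zero hp fun hi' => lt_irrefl i (hlt i hi i hi'), add_zero]
      exact h.count_le i hi
    · rw [h.count_eq_zero hp fun hi' => lt_irrefl i (hlt i hi' i hi), zero_add]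
      exact h'.count_le i hi

theorem flatMap {L : List (Finset ℕ)} (hL : IsSuccessive L) (hLE : ∀ F ∈ L, F ⊆ E)
    (hp : Monotone p) {g : Finset ℕ → Config} {β : Finset ℕ → ℕ → ℕ}
    (h : ∀ F ∈ L, IsControlled N C p A F (β F) n (g F)) :
    IsControlled N C p A E (fun i => (L.map fun F => β F i).sum) (L.length * n) (L.flatMap g) := by
  induction L with
  | nil => exact nil
  | cons F L ih =>
    obtain ⟨hF, hL⟩ := List.pairwise_cons.mp hL
    obtain ⟨hgF, hg⟩ := List.forall_mem_cons.mp h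
    obtain ⟨hFE, hLE⟩ := List.forall_mem_cons.mp hLE
    have hhead := hgF.mono (b' := β F) hp subset_rfl (fun F' hF' => (hgF.inHull F' hF').mono hFE)
      (fun _ _ => le_rfl) le_rfl
    have htail := ih hL hLE hg
    rw [List.flatMap_cons, List.length_cons, add_mul, one_mul, add_comm,
      ← Finset.union_idempotent A]
    refine hhead.append htail (fun F₁ hF₁ F₂ hF₂ => ?_) fun i hi => ?_
    · simp only [sets, List.map_flatMap, List.mem_flatMap] at hF₂
      obtain ⟨F', hF', hF₂⟩ := hF₂
      exact (hgF.inHull F₁ hF₁).flt ((hg F' hF').inHull F₂ hF₂) (hF F' hF')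
    · rw [Finset.union_idempotent] at hi
      exact add_le_add (hhead.count_le i hi) (htail.count_le i hi)

theorem scale (h : IsControlled N C p A E b n c) (hN : IsSchlumprechtNorm N) (hC : 0 ≤ C)
    (hn : 2 ≤ n) : IsControlled N C p A E b 1 (c.scale (flog n)⁻¹) where
  isAdmissible := by
    rw [weights_scale]
    exact h.isAdmissible.scale hN hC hn
  isSuccessive := by simpa only [sets_scale] using h.isSuccessive
  weight_nonneg := by
    simpa only [weights_scale, List.forall_mem_map] using fun w hw =>
      mul_nonneg (inv_nonneg.mpr (flog_nonneg n)) (h.weight_nonneg w hw)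
  nonempty := by simpa only [sets_scale] using h.nonempty
  inHull := by simpa only [sets_scale] using h.inHull
  subset_block := by simpa only [sets_scale] using h.subset_block
  count_le := by simpa only [count, sets_scale] using h.count_le

end IsControlled

end Config

/-! ### Linear combinations of blocks -/

/-- The indicator that `E` has elements on both sides of the cut between `q - 1` and `q`. -/
def crossing (E : Finset ℕ) (q : ℕ) : ℕ :=
  if (∃ x ∈ E, x < q) ∧ ∃ y ∈ E, q ≤ y then 1 else 0

theorem crossing_mono {E F : Finset ℕ} (h : E ⊆ F) (q : ℕ) : crossing E q ≤ crossing F q := by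
  unfold crossing
  split_ifs with hE hF
  · exact le_rfl
  · exact absurd (hE.imp (Exists.imp fun _ => And.imp_left (@h _))
      (Exists.imp fun _ => And.imp_left (@h _))) hF
  · exact zero_le_one
  · exact le_rfl

theorem sum_crossing_le {E : Finset ℕ} {L : List (Finset ℕ)} (hL : IsSuccessive L)
    (hLE : ∀ F ∈ L, F ⊆ E) (q : ℕ) : (L.map fun F => crossing F q).sum ≤ crossing E q := by
  induction L with
  | nil => exact Nat.zero_le _
  | cons F L ih =>
    obtain ⟨hFL, hL⟩ := List.pairwise_cons.mp hL
    obtain ⟨hFE, hLE⟩ := List.forall_mem_cons.mp hLE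
    rw [List.map_cons, List.sum_cons]
    by_cases hF : (∃ x ∈ F, x < q) ∧ ∃ y ∈ F, q ≤ y
    · have htail : (L.map fun F => crossing F q).sum = 0 := by
        refine List.sum_eq_zero fun t ht => ?_
        obtain ⟨F', hF', rfl⟩ := List.mem_map.mp ht
        obtain ⟨y, hy, hqy⟩ := hF.2
        exact if_neg fun ⟨⟨x, hx, hxq⟩, _⟩ =>
          absurd (hFL F' hF' y hy x hx) (not_lt.mpr (hxq.le.trans hqy))
      rw [htail, add_zero]
      exact crossing_mono hFE q
    · rw [show crossing F q = 0 from if_neg hF, zero_add]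
      exact ih hL hLE

/-- The number of end points of the `i`-th block at which that block is cut off within `E`. -/
def cutCount (p : ℕ → ℕ) (i : ℕ) (E : Finset ℕ) : ℕ := crossing E (p i) + crossing E (p (i + 1))

theorem cutCount_le_two (p : ℕ → ℕ) (i : ℕ) (E : Finset ℕ) : cutCount p i E ≤ 2 := by
  unfold cutCount crossing
  split_ifs <;> omega

theorem sum_cutCount_le (p : ℕ → ℕ) {E : Finset ℕ} {L : List (Finset ℕ)} (hL : IsSuccessive L)
    (hLE : ∀ F ∈ L, F ⊆ E) (i : ℕ) : (L.map fun F => cutCount p i F).sum ≤ cutCount p i E := by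
  simp only [cutCount, List.sum_map_add]
  exact add_le_add (sum_crossing_le hL hLE _) (sum_crossing_le hL hLE _)

theorem one_le_cutCount {p : ℕ → ℕ} {i k : ℕ} {E : Finset ℕ} (hk : k ∈ E) (hki : k ∈ block p i)
    (hE : ¬E ⊆ block p i) : 1 ≤ cutCount p i E := by
  obtain ⟨j, hj, hji⟩ := Finset.not_subset.mp hE
  rw [mem_block] at hki hji
  by_cases hjp : j < p i
  · exact le_add_right (if_pos ⟨⟨j, hj, hjp⟩, k, hk, hki.1⟩).ge
  · exact le_add_left (if_pos ⟨⟨k, hk, hki.2⟩, j, hj, by omega⟩).ge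

/-- The number of sets inside the `i`-th block allotted to a node `E` at depth `d` of a norming
tree. A node that does not cut the block is only used if it lies inside the block. -/
def budget (p W : ℕ → ℕ) (E : Finset ℕ) (d i : ℕ) : ℕ :=
  cutCount p i E * (i - d) * W i + if E ⊆ block p i ∧ E.Nonempty then 1 else 0

theorem le_budget {p W : ℕ → ℕ} {E : Finset ℕ} {d i : ℕ} (hE : 1 ≤ cutCount p i E) (hd : d < i) :
    W i ≤ budget p W E d i :=
  (Nat.le_mul_of_pos_left (W i) (Nat.mul_pos hE (Nat.sub_pos_of_lt hd))).trans
    (Nat.le_add_right _ _)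

theorem sum_budget_le {p W : ℕ → ℕ} {E : Finset ℕ} {L : List (Finset ℕ)} (hL : IsSuccessive L)
    (hLE : ∀ F ∈ L, F ⊆ E) {d i : ℕ} (hE : 1 ≤ cutCount p i E) (hd : d < i)
    (hlen : L.length ≤ W i) : (L.map fun F => budget p W F (d + 1) i).sum ≤ budget p W E d i := by
  obtain ⟨e, rfl⟩ := Nat.exists_eq_add_of_lt hd
  have hleaves : (L.map fun F => if F ⊆ block p (d + e + 1) ∧ F.Nonempty then 1 else 0).sum
      ≤ L.length := by
    refine (List.sum_le_card_nsmul _ 1 fun t ht => ?_).trans_eq (by simp)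
    obtain ⟨F, -, rfl⟩ := List.mem_map.mp ht
    split_ifs <;> omega
  simp only [budget, List.sum_map_add, List.sum_map_mul_right,
    show d + e + 1 - (d + 1) = e by omega, show d + e + 1 - d = e + 1 by omega]
  set k := cutCount p (d + e + 1) E
  set w := W (d + e + 1)
  calc (L.map fun F => cutCount p (d + e + 1) F).sum * e * w + _
      ≤ k * e * w + w :=
        add_le_add (by gcongr; exact sum_cutCount_le p hL hLE _) (hleaves.trans hlen)
    _ ≤ k * e * w + k * w := by gcongr; exact Nat.le_mul_of_pos_left w hE
    _ = k * (e + 1) * w := by ring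
    _ ≤ _ := Nat.le_add_right _ _

theorem proj_sum_smul_of_subset_block {p : ℕ → ℕ} (hp : Monotone p) {u : ℕ → c00}
    (hu : ∀ i, (u i).support ⊆ block p i) (a : ℕ → ℝ) (A : Finset ℕ) {F : Finset ℕ} {i : ℕ}
    (hF : F ⊆ block p i) :
    proj F (∑ j ∈ A, a j • u j) = if i ∈ A then a i • proj F (u i) else 0 := by
  have hterm : ∀ j, j ≠ i → proj F (u j) = 0 := fun j hji => proj_eq_zero fun k hk => by
    by_contra h
    exact hji (eq_of_mem_block hp (hu j (Finsupp.mem_support_iff.mpr h)) (hF hk))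
  rw [proj_sum, ← Finset.sum_ite_eq' A i fun j => a j • proj F (u j)]
  refine Finset.sum_congr rfl fun j _ => ?_
  split_ifs with h
  · rw [proj_smul]
  · rw [proj_smul, hterm j h, smul_zero]

theorem proj_sum_support_smul {p : ℕ → ℕ} (hp : Monotone p) {u : ℕ → c00}
    (hu : ∀ i, (u i).support ⊆ block p i) (a : ℕ →₀ ℝ) {F : Finset ℕ} {i : ℕ} (hF : F ⊆ block p i) :
    proj F (∑ j ∈ a.support, a j • u j) = a i • proj F (u i) := by
  rw [proj_sum_smul_of_subset_block hp hu a _ hF]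
  split_ifs with hi
  · rfl
  · rw [Finsupp.notMem_support_iff.mp hi, zero_smul]

/-- `z` has an `l`-average `(1/f(l)) ∑ ‖E z‖` exceeding `θ`. -/
def HasLargeAverage (N : c00 → ℝ) (z : c00) (l : ℕ) (θ : ℝ) : Prop :=
  ∃ L : List (Finset ℕ), IsSuccessive L ∧ L.length ≤ l ∧ θ * flog l < normSum N L z

/-- The `i`-th vector is bad for `l` if its threshold `M i` permits `l`, but its `l`-averages are
not negligible. -/
def IsBad (N : c00 → ℝ) (M : ℕ → ℕ) (u : ℕ → c00) (l i : ℕ) : Prop :=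
  M i ≤ l ∧ HasLargeAverage N (u i) l ((2 / 3) ^ i)

/-- The coefficients of simultaneously bad vectors are dominated by the value of a configuration at
the whole combination `∑ a i • u i`. -/
def DominatesBad (N : c00 → ℝ) (C : ℝ) (p : ℕ → ℕ) (u : ℕ → c00) (M W : ℕ → ℕ) (a : ℕ →₀ ℝ) :
    Prop :=
  ∀ (l : ℕ) (J : Finset ℕ), (∀ i ∈ J, IsBad N M u l i) →
    ∃ (E : Finset ℕ) (c : Config), c.IsControlled N C p J E W 1 ∧
      ∑ i ∈ J, |a i| ≤ c.value N (∑ i ∈ a.support, a i • u i)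

/-- A linear combination `∑ a i • u i` of vectors supported in consecutive blocks, with rapidly
growing thresholds `M i`, numbers `W i` of sets which may be spent inside the `i`-th block, and the
assumption that simultaneously bad vectors are dominated by configurations. -/
structure BlockCombination (N : c00 → ℝ) where
  C : ℝ
  one_le_C : 1 ≤ C
  u : ℕ → c00
  p : ℕ → ℕ
  monotone_p : Monotone p
  support_subset : ∀ i, (u i).support ⊆ block p i
  norm_le_one : ∀ i, N (u i) ≤ 1
  M : ℕ → ℕ
  W : ℕ → ℕ
  strictMono_M : StrictMono M
  le_flog_M : (208 : ℝ) ^ 2 ≤ flog (M 0)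
  pow_four_le_W : ∀ i, M i ^ 4 ≤ W i
  a : ℕ →₀ ℝ
  dominatesBad : DominatesBad N C p u M W a

namespace BlockCombination

variable {N : c00 → ℝ} (S : BlockCombination N)

/-- The part of the combination with indices in `A`. -/
noncomputable def part (A : Finset ℕ) : c00 := ∑ i ∈ A, S.a i • S.u i

/-- The value of a configuration at the whole combination. -/
noncomputable def val (c : Config) : ℝ := c.value N (S.part S.a.support)

/-- Control of a configuration with respect to the blocks and the constant of the combination. -/
def IsControlled (A E : Finset ℕ) (b : ℕ → ℕ) (n : ℕ) (c : Config) : Prop :=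
  c.IsControlled N S.C S.p A E b n

/-- The error permitted at a node `E` at depth `d` of a norming tree. -/
noncomputable def loss (E A : Finset ℕ) (d : ℕ) : ℝ :=
  ∑ i ∈ A, (cutCount S.p i E : ℝ) * (|S.a i| * ((2 / 3) ^ i * (3 / 2) ^ d))

theorem loss_nonneg (E A : Finset ℕ) (d : ℕ) : 0 ≤ S.loss E A d :=
  Finset.sum_nonneg fun i _ => by positivity

theorem loss_mono (E : Finset ℕ) {A A' : Finset ℕ} (h : A ⊆ A') (d : ℕ) :
    S.loss E A d ≤ S.loss E A' d :=
  Finset.sum_le_sum_of_subset_of_nonneg h fun i _ _ => by positivity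

theorem loss_sdiff_add_loss (E : Finset ℕ) {A A' : Finset ℕ} (h : A' ⊆ A) (d : ℕ) :
    S.loss E (A \ A') d + S.loss E A' d = S.loss E A d :=
  Finset.sum_sdiff h

/-- Going down one level multiplies the loss by `3 / 2`, which the factor `1 / f n ≤ 2 / 3`
compensates. -/
theorem sum_loss_le {E : Finset ℕ} (A : Finset ℕ) {n : ℕ} (hn : 2 ≤ n) {L : List (Finset ℕ)}
    (hL : IsSuccessive L) (hLE : ∀ F ∈ L, F ⊆ E) (d : ℕ) :
    (flog n)⁻¹ * (L.map fun F => S.loss F A (d + 1)).sum ≤ S.loss E A d := by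
  have hf := three_halves_le_flog hn
  have hcut : ∀ i, ((L.map fun F => (cutCount S.p i F : ℝ)).sum) ≤ cutCount S.p i E := fun i => by
    have := sum_cutCount_le S.p hL hLE i
    rw [← Nat.cast_le (α := ℝ), Nat.cast_list_sum, List.map_map] at this
    exact this
  have hswap : (L.map fun F => S.loss F A (d + 1)).sum = ∑ i ∈ A,
      (L.map fun F => (cutCount S.p i F : ℝ)).sum *
        (|S.a i| * ((2 / 3) ^ i * (3 / 2) ^ (d + 1))) := by
    simp only [← List.sum_map_mul_right, loss]
    clear hL hLE hcut
    induction L with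
    | nil => simp
    | cons F L ih => simp only [List.map_cons, List.sum_cons, ih, Finset.sum_add_distrib]
  rw [inv_mul_le_iff₀ (by linarith), hswap, loss, Finset.mul_sum]
  refine Finset.sum_le_sum fun i _ => ?_
  calc _ ≤ (cutCount S.p i E : ℝ) * (|S.a i| * ((2 / 3) ^ i * (3 / 2) ^ (d + 1))) := by
        gcongr
        exact hcut i
    _ = 3 / 2 * (cutCount S.p i E * (|S.a i| * ((2 / 3) ^ i * (3 / 2) ^ d))) := by ring
    _ ≤ _ := by gcongr

theorem part_sdiff_add_part {A A' : Finset ℕ} (h : A' ⊆ A) :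
    S.part (A \ A') + S.part A' = S.part A :=
  Finset.sum_sdiff h

theorem part_union {A A' : Finset ℕ} (h : Disjoint A A') :
    S.part (A ∪ A') = S.part A + S.part A' :=
  Finset.sum_union h

theorem norm_part_le (hN : IsNormC00 N) (A : Finset ℕ) : N (S.part A) ≤ ∑ i ∈ A, |S.a i| := by
  refine (hN.sum_le _ _).trans (Finset.sum_le_sum fun i _ => ?_)
  rw [hN.map_smul]
  exact mul_le_of_le_one_right (abs_nonneg _) (S.norm_le_one i)

theorem proj_part_of_subset_block (A : Finset ℕ) {F : Finset ℕ} {i : ℕ} (hF : F ⊆ block S.p i) :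
    proj F (S.part A) = if i ∈ A then S.a i • proj F (S.u i) else 0 :=
  proj_sum_smul_of_subset_block S.monotone_p S.support_subset S.a A hF

theorem proj_part_eq_proj_total {A F : Finset ℕ} {i : ℕ} (hi : i ∈ A) (hF : F ⊆ block S.p i) :
    proj F (S.part A) = proj F (S.part S.a.support) := by
  rw [S.proj_part_of_subset_block A hF, S.proj_part_of_subset_block _ hF, if_pos hi]
  split_ifs with h
  · rfl
  · rw [Finsupp.notMem_support_iff.mp h, zero_smul]

theorem exists_mem_block_of_mem_support_part {A : Finset ℕ} {k : ℕ}
    (hk : k ∈ (S.part A).support) : ∃ i ∈ A, k ∈ block S.p i := by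
  obtain ⟨i, hi, hki⟩ := Finset.mem_biUnion.mp (Finsupp.support_finsetSum hk)
  exact ⟨i, hi, S.support_subset i (Finsupp.support_smul hki)⟩

theorem two_le_M (i : ℕ) : 2 ≤ S.M i := by
  refine le_trans ?_ (S.strictMono_M.monotone (Nat.zero_le i))
  by_contra h
  have hle := flog_natCast_mono (show S.M 0 ≤ 1 by omega)
  rw [Nat.cast_one, flog_one] at hle
  linarith [S.le_flog_M]

theorem M_le_W (i : ℕ) : S.M i ≤ S.W i :=
  (Nat.le_self_pow (by norm_num) _).trans (S.pow_four_le_W i)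

theorem le_budget {E : Finset ℕ} {d i : ℕ} (hE : 1 ≤ cutCount S.p i E) (hd : d < i) :
    S.W i ≤ budget S.p S.W E d i :=
  _root_.le_budget hE hd

theorem one_le_budget {E : Finset ℕ} {d i : ℕ} (hE : 1 ≤ cutCount S.p i E) (hd : d < i) :
    1 ≤ budget S.p S.W E d i :=
  (one_le_two.trans ((S.two_le_M i).trans (S.M_le_W i))).trans (_root_.le_budget hE hd)

theorem exists_isControlled_of_subset_block (hN : IsNormC00 N) {A E F : Finset ℕ} {b : ℕ → ℕ}
    {i : ℕ} (hFi : F ⊆ block S.p i) (hFE : F ⊆ E) (hb : i ∈ A → F.Nonempty → 1 ≤ b i) :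
    ∃ c, S.IsControlled A E b 1 c ∧ N (proj F (S.part A)) ≤ S.val c := by
  by_cases hF : i ∈ A ∧ F.Nonempty
  · refine ⟨[(F, 1)], .singleton hN S.one_le_C S.monotone_p hF.2 hFE hF.1 hFi (hb hF.1 hF.2), ?_⟩
    rw [val, Config.value_singleton, one_mul, S.proj_part_eq_proj_total hF.1 hFi]
  · refine ⟨[], .nil, le_of_eq ?_⟩
    have hproj : proj F (S.part A) = 0 := by
      rw [S.proj_part_of_subset_block A hFi]
      split_ifs with hi
      · rw [Finset.not_nonempty_iff_eq_empty.mp fun h => hF ⟨hi, h⟩, proj_eq_zero (by simp),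
          smul_zero]
      · rfl
    rw [hproj, hN.map_zero, val, Config.value_nil]

/-- The `l`-average `(1/f(l)) ∑ ‖E x‖` of the part of the combination with indices in `A`. -/
noncomputable def avg (l : ℕ) (L : List (Finset ℕ)) (A : Finset ℕ) : ℝ :=
  (flog l)⁻¹ * normSum N L (S.part A)

/-- The first step of a norming tree at a node `E` of depth `d`: up to a negligible part with
indices outside `A'`, the norm of `part A` on `E` is an `l`-average over proper subsets of `E`, and
`E` cuts off all blocks with index in `A'`. -/
structure IsSplitting (E A : Finset ℕ) (d l : ℕ) (L : List (Finset ℕ)) (A' : Finset ℕ) : Prop where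
  two_le : 2 ≤ l
  isSuccessive : IsSuccessive L
  length_le : L.length ≤ l
  ssubset : ∀ F ∈ L, F ⊂ E
  subset : A' ⊆ A
  one_le_cutCount : ∀ i ∈ A', 1 ≤ cutCount S.p i E
  depth_lt : ∀ i ∈ A', d < i
  exists_mem_block : ∀ i ∈ A', ∃ k ∈ E, k ∈ block S.p i
  norm_le : N (proj E (S.part A)) ≤ S.avg l L A' + S.loss E (A \ A') d

theorem norm_proj_part_le_loss (hN : IsSchlumprechtNorm N) {E A : Finset ℕ} {d : ℕ}
    (hE : ∀ i, ¬E ⊆ block S.p i) (hA : ∀ i ∈ A, ∀ k ∈ E, k ∈ block S.p i → i ≤ d) :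
    N (proj E (S.part A)) ≤ S.loss E A d := by
  rw [part, proj_sum]
  refine (hN.1.sum_le _ _).trans (Finset.sum_le_sum fun i hi => ?_)
  rw [proj_smul, hN.1.map_smul, mul_left_comm]
  refine mul_le_mul_of_nonneg_left ?_ (abs_nonneg _)
  by_cases hmeet : ∃ k ∈ E, k ∈ block S.p i
  · obtain ⟨k, hk, hki⟩ := hmeet
    obtain ⟨e, rfl⟩ := Nat.exists_eq_add_of_le (hA i hi k hk hki)
    have hcut : (1 : ℝ) ≤ cutCount S.p i E := by exact_mod_cast one_le_cutCount hk hki (hE i)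
    have hpow : (1 : ℝ) ≤ (2 / 3) ^ i * (3 / 2) ^ (i + e) := by
      rw [pow_add, ← mul_assoc, ← mul_pow]
      norm_num
      exact one_le_pow₀ (by norm_num)
    exact ((hN.map_proj_le _ _).trans (S.norm_le_one i)).trans
      (one_le_mul_of_one_le_of_one_le hcut hpow)
  · rw [proj_eq_zero fun k hk => ?_, hN.1.map_zero]
    · positivity
    · by_contra hki
      exact hmeet ⟨k, hk, S.support_subset i (Finsupp.mem_support_iff.mpr hki)⟩

theorem exists_isControlled_of_le_supNorm (hN : IsSchlumprechtNorm N) {E A : Finset ℕ} {b : ℕ → ℕ}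
    (hb : ∀ i ∈ A, 1 ≤ b i) (hsup : N (proj E (S.part A)) ≤ supNorm (proj E (S.part A))) :
    ∃ c, S.IsControlled A E b 1 c ∧ N (proj E (S.part A)) ≤ S.val c := by
  by_cases hzero : proj E (S.part A) = 0
  · exact ⟨[], .nil, by rw [hzero, hN.1.map_zero, val, Config.value_nil]⟩
  obtain ⟨k, hk, hmax⟩ := exists_abs_eq_supNorm hzero
  rw [support_proj, Finset.mem_filter] at hk
  obtain ⟨i, hi, hki⟩ := S.exists_mem_block_of_mem_support_part hk.1
  obtain ⟨c, hc, hval⟩ := S.exists_isControlled_of_subset_block hN.1 (A := A)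
    (Finset.singleton_subset_iff.mpr hki) (Finset.singleton_subset_iff.mpr hk.2) fun _ _ => hb i hi
  refine ⟨c, hc, (hsup.trans_eq hmax.symm).trans (le_trans ?_ hval)⟩
  refine le_trans (le_of_eq ?_) (hN.abs_apply_le _ k)
  simp [proj_apply, hk.2]

theorem exists_isControlled_or_isSplitting (hN : IsSchlumprechtNorm N) (E A : Finset ℕ) (d : ℕ) :
    (∃ c, S.IsControlled A E (budget S.p S.W E d) 1 c ∧
      N (proj E (S.part A)) ≤ S.val c + S.loss E A d) ∨
    ∃ l L A', S.IsSplitting E A d l L A' := by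
  classical
  by_cases hleaf : ∃ i, E ⊆ block S.p i
  · obtain ⟨i, hi⟩ := hleaf
    obtain ⟨c, hc, hval⟩ := S.exists_isControlled_of_subset_block hN.1 (A := A)
      (b := budget S.p S.W E d) hi subset_rfl
      fun _ hne => le_add_left (if_pos ⟨hi, hne⟩).ge
    exact .inl ⟨c, hc, hval.trans (le_add_of_nonneg_right (S.loss_nonneg E A d))⟩
  push Not at hleaf
  set A' := A.filter fun i => d < i ∧ ∃ k ∈ E, k ∈ block S.p i
  have hmem : ∀ i ∈ A', d < i ∧ ∃ k ∈ E, k ∈ block S.p i := fun i hi => (Finset.mem_filter.mp hi).2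
  have hcut : ∀ i ∈ A', 1 ≤ cutCount S.p i E := fun i hi => by
    obtain ⟨k, hk, hki⟩ := (hmem i hi).2
    exact one_le_cutCount hk hki (hleaf i)
  have hrest : N (proj E (S.part A)) ≤ S.loss E (A \ A') d + N (proj E (S.part A')) := by
    rw [← S.part_sdiff_add_part (Finset.filter_subset _ A : A' ⊆ A), proj_add]
    refine (hN.1.add_le _ _).trans (add_le_add_left (S.norm_proj_part_le_loss hN hleaf ?_) _)
    intro i hi k hk hki
    rw [Finset.mem_sdiff, Finset.mem_filter] at hi
    by_contra hdi
    exact hi.2 ⟨hi.1, not_le.mp hdi, k, hk, hki⟩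
  rcases lt_or_ge (supNorm (proj E (S.part A'))) (N (proj E (S.part A'))) with hsup | hsup
  · obtain ⟨l, hl, L, hlen, hL, hLsub, hval⟩ := hN.exists_isSuccessive_ssubset hsup
    have hsub : (proj E (S.part A')).support ⊆ E := by
      rw [support_proj]
      exact fun k hk => (Finset.mem_filter.mp hk).2
    refine .inr ⟨l, L, A', hl, hL, hlen, fun F hF => (hLsub F hF).trans_subset hsub,
      Finset.filter_subset _ _, hcut, fun i hi => (hmem i hi).1, fun i hi => (hmem i hi).2, ?_⟩
    rw [normSum_congr fun F hF => proj_proj_of_subset ((hLsub F hF).subset.trans hsub) _] at hval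
    rw [avg, ← hval, add_comm]
    exact hrest
  · obtain ⟨c, hc, hval⟩ := S.exists_isControlled_of_le_supNorm hN
      (fun i hi => S.one_le_budget (hcut i hi) (hmem i hi).1) hsup
    refine .inl ⟨c, hc.mono S.monotone_p (Finset.filter_subset _ _) hc.inHull (fun _ _ => le_rfl)
      le_rfl, ?_⟩
    linarith [S.loss_mono E (Finset.sdiff_subset : A \ A' ⊆ A) d]

end BlockCombination

/-! ### Estimates along a norming tree -/

theorem eq_min'_union_filter_union_max' {J : Finset ℕ} (hne : J.Nonempty) :
    J = {J.min' hne} ∪ ((J.filter fun k => J.min' hne < k ∧ k < J.max' hne) ∪ {J.max' hne}) := by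
  ext k
  simp only [Finset.mem_union, Finset.mem_singleton, Finset.mem_filter]
  refine ⟨fun hk => ?_, ?_⟩
  · rcases (J.min'_le k hk).eq_or_lt with hik | hik
    · exact .inl hik.symm
    · rcases (J.le_max' k hk).eq_or_lt with hkj | hkj
      · exact .inr (.inr hkj)
      · exact .inr (.inl ⟨hk, hik, hkj⟩)
  · rintro (rfl | hk | rfl)
    exacts [J.min'_mem hne, hk.1, J.max'_mem hne]

namespace BlockCombination

variable {N : c00 → ℝ} (S : BlockCombination N)

theorem val_append (c c' : Config) : S.val (c ++ c') = S.val c + S.val c' :=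
  Config.value_append c c'

theorem IsControlled.val_nonneg {S : BlockCombination N} {A E : Finset ℕ} {b : ℕ → ℕ} {n : ℕ}
    {c : Config} (hc : S.IsControlled A E b n c) (hN : IsNormC00 N) : 0 ≤ S.val c :=
  hc.value_nonneg hN _

theorem avg_le_norm_proj (hN : IsSchlumprechtNorm N) {E : Finset ℕ} {l : ℕ} {L : List (Finset ℕ)}
    (hl : 2 ≤ l) (hL : IsSuccessive L) (hlen : L.length ≤ l) (hLE : ∀ F ∈ L, F ⊆ E)
    (A : Finset ℕ) : S.avg l L A ≤ N (proj E (S.part A)) := by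
  rw [avg, inv_mul_le_iff₀ (flog_pos hl)]
  exact hN.normSum_le_of_subset hl hL hlen hLE _

theorem avg_union_le (hN : IsNormC00 N) (l : ℕ) (L : List (Finset ℕ)) {A A' : Finset ℕ}
    (h : Disjoint A A') : S.avg l L (A ∪ A') ≤ S.avg l L A + S.avg l L A' := by
  rw [avg, avg, avg, ← mul_add, S.part_union h]
  exact mul_le_mul_of_nonneg_left (hN.normSum_add_le L _ _) (inv_nonneg.mpr (flog_nonneg l))

theorem exists_isControlled_union (hN : IsNormC00 N) {A A' E : Finset ℕ} {b : ℕ → ℕ} {m n : ℕ}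
    (hlt : ∀ i ∈ A, ∀ j ∈ A', i < j)
    (h : ∃ c, S.IsControlled A E b m c ∧ N (proj E (S.part A)) ≤ S.val c)
    (h' : ∃ c, S.IsControlled A' E b n c ∧ N (proj E (S.part A')) ≤ S.val c) :
    ∃ c, S.IsControlled (A ∪ A') E b (m + n) c ∧ N (proj E (S.part (A ∪ A'))) ≤ S.val c := by
  obtain ⟨c, hc, hval⟩ := h
  obtain ⟨c', hc', hval'⟩ := h'
  have hdisj : Disjoint A A' :=
    Finset.disjoint_left.mpr fun i hi hi' => lt_irrefl i (hlt i hi i hi')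
  refine ⟨c ++ c', hc.append_of_lt hc' S.monotone_p hlt, ?_⟩
  rw [S.part_union hdisj, proj_add, val_append]
  exact (hN.add_le _ _).trans (add_le_add hval hval')

namespace IsSplitting

variable {S} {E A A' : Finset ℕ} {d l n : ℕ} {L : List (Finset ℕ)}

theorem subset_node (h : S.IsSplitting E A d l L A') : ∀ F ∈ L, F ⊆ E :=
  fun F hF => (h.ssubset F hF).subset

theorem card_lt (h : S.IsSplitting E A d l L A') (hE : E.card < n + 1) : ∀ F ∈ L, F.card < n :=
  fun F hF => (Finset.card_lt_card (h.ssubset F hF)).trans_le (Nat.le_of_lt_succ hE)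

theorem exists_isControlled_singleton (h : S.IsSplitting E A d l L A') (hN : IsNormC00 N) {i : ℕ}
    (hi : i ∈ A') : ∃ c, S.IsControlled {i} E (budget S.p S.W E d) 1 c ∧
      N (proj E (S.part {i})) ≤ S.val c := by
  have hsupp : (S.part {i}).support ⊆ block S.p i := fun k hk => by
    obtain ⟨j, hj, hkj⟩ := S.exists_mem_block_of_mem_support_part hk
    rwa [Finset.mem_singleton.mp hj] at hkj
  obtain ⟨c, hc, hval⟩ := S.exists_isControlled_of_subset_block hN (A := {i})
    Finset.inter_subset_right (Finset.inter_subset_left (s₁ := E))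
    fun _ _ => S.one_le_budget (h.one_le_cutCount i hi) (h.depth_lt i hi)
  rw [← proj_proj, proj_eq_self hsupp] at hval
  exact ⟨c, hc, hval⟩

/-- The configuration of `dominatesBad` lies in the hull of `E` because `E` meets a block on
either side of it. -/
theorem exists_isControlled_of_between (h : S.IsSplitting E A d l L A')
    (hN : IsSchlumprechtNorm N) {J : Finset ℕ} (hJ : J ⊆ A')
    (hbad : ∀ i ∈ J, IsBad N S.M S.u l i)
    (hbetween : ∀ i ∈ J, (∃ j ∈ A', j < i) ∧ ∃ j ∈ A', i < j) :
    ∃ c, S.IsControlled J E (budget S.p S.W E d) 1 c ∧ N (proj E (S.part J)) ≤ S.val c := by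
  obtain ⟨E', c, hc, hval⟩ := S.dominatesBad l J hbad
  refine ⟨c, hc.mono S.monotone_p subset_rfl (fun F hF k hk => ?_)
    (fun i hi => S.le_budget (h.one_le_cutCount i (hJ hi)) (h.depth_lt i (hJ hi))) le_rfl,
    ((hN.map_proj_le _ _).trans (S.norm_part_le hN.1 J)).trans hval⟩
  obtain ⟨i, hi, hFi⟩ := hc.subset_block F hF
  obtain ⟨⟨j, hj, hji⟩, j', hj', hij'⟩ := hbetween i hi
  obtain ⟨x, hx, hxj⟩ := h.exists_mem_block j hj
  obtain ⟨y, hy, hyj'⟩ := h.exists_mem_block j' hj'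
  exact ⟨⟨x, hx, (block_FLt_block S.monotone_p hji x hxj k (hFi hk)).le⟩,
    ⟨y, hy, (block_FLt_block S.monotone_p hij' k (hFi hk) y hyj').le⟩⟩

theorem exists_isControlled_of_isBad (h : S.IsSplitting E A d l L A')
    (hN : IsSchlumprechtNorm N) {J : Finset ℕ} (hJ : J ⊆ A')
    (hbad : ∀ i ∈ J, IsBad N S.M S.u l i) :
    ∃ c, S.IsControlled J E (budget S.p S.W E d) 3 c ∧ N (proj E (S.part J)) ≤ S.val c := by
  rcases J.eq_empty_or_nonempty with rfl | hne
  · exact ⟨[], .nil, by simp [part, proj_zero, hN.1.map_zero, val, Config.value_nil]⟩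
  rcases hne.exists_eq_singleton_or_nontrivial with ⟨i, rfl⟩ | hnt
  · obtain ⟨c, hc, hval⟩ :=
      h.exists_isControlled_singleton hN.1 (hJ (Finset.mem_singleton_self i))
    exact ⟨c, hc.mono S.monotone_p subset_rfl hc.inHull (fun _ _ => le_rfl) (by norm_num), hval⟩
  set i := J.min' hne
  set j := J.max' hne
  have hi : i ∈ J := J.min'_mem hne
  have hj : j ∈ J := J.max'_mem hne
  have hij : i < j := J.min'_lt_max'_of_card (Finset.one_lt_card_iff_nontrivial.mpr hnt)
  set mid := J.filter fun k => i < k ∧ k < j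
  have hmid : ∀ k ∈ mid, k ∈ J ∧ i < k ∧ k < j := fun k hk => Finset.mem_filter.mp hk
  have hbetween : ∀ k ∈ mid, (∃ j ∈ A', j < k) ∧ ∃ j ∈ A', k < j := fun k hk =>
    ⟨⟨i, hJ hi, (hmid k hk).2.1⟩, j, hJ hj, (hmid k hk).2.2⟩
  rw [eq_min'_union_filter_union_max' hne]
  refine S.exists_isControlled_union hN.1 (n := 2) ?_
    (h.exists_isControlled_singleton hN.1 (hJ hi)) (S.exists_isControlled_union hN.1 ?_
      (h.exists_isControlled_of_between hN ((Finset.filter_subset _ _).trans hJ)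
        (fun k hk => hbad k (hmid k hk).1) hbetween)
      (h.exists_isControlled_singleton hN.1 (hJ hj)))
  · simp only [Finset.mem_union, Finset.mem_singleton]
    rintro _ rfl k (hk | rfl)
    exacts [(hmid k hk).2.1, hij]
  · simp only [Finset.mem_singleton]
    rintro k hk _ rfl
    exact (hmid k hk).2.2

theorem avg_le_loss (h : S.IsSplitting E A d l L A') (hN : IsNormC00 N) {B : Finset ℕ}
    (hB : B ⊆ A') (hsmall : ∀ i ∈ B, ¬HasLargeAverage N (S.u i) l ((2 / 3) ^ i)) :
    S.avg l L B ≤ S.loss E B d := by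
  have hf := flog_pos h.two_le
  rw [avg, inv_mul_le_iff₀ hf, loss, Finset.mul_sum]
  refine (hN.normSum_sum_smul_le L B S.a S.u).trans (Finset.sum_le_sum fun i hi => ?_)
  have havg : normSum N L (S.u i) ≤ (2 / 3) ^ i * flog l :=
    not_lt.mp fun hlt => hsmall i hi ⟨L, h.isSuccessive, h.length_le, hlt⟩
  have hfactor : (1 : ℝ) ≤ cutCount S.p i E * (3 / 2) ^ d :=
    one_le_mul_of_one_le_of_one_le (by exact_mod_cast h.one_le_cutCount i (hB hi))
      (one_le_pow₀ (by norm_num))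
  calc |S.a i| * normSum N L (S.u i) ≤ |S.a i| * ((2 / 3) ^ i * flog l) * 1 := by
        rw [mul_one]
        gcongr
    _ ≤ |S.a i| * ((2 / 3) ^ i * flog l) * (cutCount S.p i E * (3 / 2) ^ d) := by gcongr
    _ = _ := by ring

end IsSplitting

/-- The constant in the refined estimate for `l`-averages. -/
noncomputable def refinedConst (l : ℕ) : ℝ := 1 + 208 / √(flog l)

theorem one_le_refinedConst (l : ℕ) : 1 ≤ refinedConst l :=
  le_add_of_nonneg_right (by positivity)

theorem sqrt_flog_ge {l : ℕ} (hl : S.M 0 ≤ l) : 208 ≤ √(flog l) :=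
  Real.le_sqrt_of_sq_le (S.le_flog_M.trans (flog_natCast_mono hl))

theorem refinedConst_le_two {l : ℕ} (hl : S.M 0 ≤ l) : refinedConst l ≤ 2 := by
  have hsqrt := S.sqrt_flog_ge hl
  have := (div_le_one (by linarith)).mpr hsqrt
  rw [refinedConst]
  linarith

/-- The estimate by a single configuration, with constant `5`, for sets with fewer than `n`
elements. -/
def CrudeEstimate (n : ℕ) : Prop :=
  ∀ (E A : Finset ℕ) (d : ℕ), E.card < n → ∃ c, S.IsControlled A E (budget S.p S.W E d) 1 c ∧
    N (proj E (S.part A)) ≤ 5 * S.val c + S.loss E A d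

/-- The estimate by a single configuration, with constant close to `1`, for `l`-averages of vectors
whose thresholds exceed `l`, over sets with fewer than `n` elements. -/
def RefinedEstimate (n : ℕ) : Prop :=
  ∀ (l : ℕ) (E A : Finset ℕ) (d : ℕ) (L : List (Finset ℕ)), S.M 0 ≤ l → (∀ i ∈ A, l < S.M i) →
    IsSuccessive L → L.length ≤ l → (∀ F ∈ L, F ⊆ E) → (∀ F ∈ L, F.card < n) →
    ∃ c, S.IsControlled A E (fun i => (L.map fun F => budget S.p S.W F d i).sum) 1 c ∧
      S.avg l L A ≤ refinedConst l * S.val c + (flog l)⁻¹ * (L.map fun F => S.loss F A d).sum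

variable {S}

namespace IsSplitting

variable {E A A' : Finset ℕ} {d l n : ℕ} {L : List (Finset ℕ)}

theorem exists_isControlled_avg_le_of_lt (h : S.IsSplitting E A d l L A')
    (hR : S.RefinedEstimate n) (hE : E.card < n + 1) (hl : S.M 0 ≤ l) {K : Finset ℕ}
    (hKA : K ⊆ A') (hK : ∀ i ∈ K, l < S.M i) :
    ∃ c, S.IsControlled K E (budget S.p S.W E d) 1 c ∧
      S.avg l L K ≤ refinedConst l * S.val c + S.loss E K d := by
  obtain ⟨c, hc, hval⟩ :=
    hR l E K (d + 1) L hl hK h.isSuccessive h.length_le h.subset_node (h.card_lt hE)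
  refine ⟨c, hc.mono S.monotone_p subset_rfl hc.inHull (fun i hi => ?_) le_rfl,
    hval.trans (add_le_add_right (S.sum_loss_le K h.two_le h.isSuccessive h.subset_node d) _)⟩
  exact sum_budget_le h.isSuccessive h.subset_node (h.one_le_cutCount i (hKA hi))
    (h.depth_lt i (hKA hi)) (h.length_le.trans ((hK i hi).le.trans (S.M_le_W i)))

/-- The vectors whose thresholds exceed `l` are left to the refined estimate; of the others, the bad
ones contribute three pieces and the remaining ones are negligible. -/
theorem exists_isControlled_avg_le (h : S.IsSplitting E A d l L A') (hN : IsSchlumprechtNorm N)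
    (hR : S.RefinedEstimate n) (hE : E.card < n + 1) (hl : S.M 0 ≤ l) :
    ∃ c, S.IsControlled A' E (budget S.p S.W E d) 4 c ∧
      S.avg l L A' ≤ refinedConst l * S.val c + S.loss E A' d := by
  classical
  set J := A'.filter fun i => IsBad N S.M S.u l i
  set K := A'.filter fun i => l < S.M i
  have hJA : J ⊆ A' := Finset.filter_subset _ _
  have hKA : K ⊆ A' := Finset.filter_subset _ _
  have hbad : ∀ i ∈ J, IsBad N S.M S.u l i := fun i hi => (Finset.mem_filter.mp hi).2
  have hK : ∀ i ∈ K, l < S.M i := fun i hi => (Finset.mem_filter.mp hi).2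
  have hJK : ∀ i ∈ J, ∀ j ∈ K, i < j := fun i hi j hj =>
    S.strictMono_M.lt_iff_lt.mp ((hbad i hi).1.trans_lt (hK j hj))
  have hdisj : Disjoint J K :=
    Finset.disjoint_left.mpr fun i hi hi' => lt_irrefl i (hJK i hi i hi')
  have hJKA : J ∪ K ⊆ A' := Finset.union_subset hJA hKA
  obtain ⟨cJ, hcJ, hvalJ⟩ := h.exists_isControlled_of_isBad hN hJA hbad
  obtain ⟨cK, hcK, hvalK⟩ := h.exists_isControlled_avg_le_of_lt hR hE hl hKA hK
  have hcJK := hcJ.append_of_lt hcK S.monotone_p hJK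
  refine ⟨cJ ++ cK, hcJK.mono S.monotone_p hJKA hcJK.inHull (fun _ _ => le_rfl) le_rfl, ?_⟩
  have hrest : S.avg l L (A' \ (J ∪ K)) ≤ S.loss E (A' \ (J ∪ K)) d := by
    refine h.avg_le_loss hN.1 Finset.sdiff_subset fun i hi hlarge => ?_
    obtain ⟨hiA, hiJK⟩ := Finset.mem_sdiff.mp hi
    rcases le_or_gt (S.M i) l with hM | hM
    · exact hiJK (Finset.mem_union_left _ (Finset.mem_filter.mpr ⟨hiA, hM, hlarge⟩))
    · exact hiJK (Finset.mem_union_right _ (Finset.mem_filter.mpr ⟨hiA, hM⟩))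
  have hsplit := S.avg_union_le hN.1 l L (Finset.sdiff_disjoint : Disjoint (A' \ (J ∪ K)) (J ∪ K))
  rw [Finset.sdiff_union_of_subset hJKA] at hsplit
  have hJ : S.avg l L J ≤ refinedConst l * S.val cJ :=
    ((S.avg_le_norm_proj hN h.two_le h.isSuccessive h.length_le h.subset_node J).trans
      hvalJ).trans (le_mul_of_one_le_left (hcJ.val_nonneg hN.1) (one_le_refinedConst l))
  have hloss := S.loss_sdiff_add_loss E hJKA d
  have hlossK := S.loss_mono E (Finset.subset_union_right : K ⊆ J ∪ K) d
  rw [val_append, mul_add]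
  linarith [S.avg_union_le hN.1 l L hdisj]

end IsSplitting

end BlockCombination

theorem mul_inv_flog_mul_pow_succ_le_one {l k : ℕ} {w : ℝ} (hl : 2 ≤ l)
    (h : w * (3 / 2) ^ k ≤ 1) : w * (flog l)⁻¹ * (3 / 2) ^ (k + 1) ≤ 1 := by
  have hweight : (flog l)⁻¹ * (3 / 2) ≤ 1 := by
    rw [inv_mul_le_iff₀ (flog_pos hl), mul_one]
    exact three_halves_le_flog hl
  calc w * (flog l)⁻¹ * (3 / 2) ^ (k + 1) = w * (3 / 2) ^ k * ((flog l)⁻¹ * (3 / 2)) := by ring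
    _ ≤ 1 := mul_le_one₀ h (mul_nonneg (inv_nonneg.mpr (flog_nonneg l)) (by norm_num)) hweight

namespace BlockCombination

variable {N : c00 → ℝ} (S : BlockCombination N)

theorem val_scale (t : ℝ) (c : Config) : S.val (c.scale t) = t * S.val c :=
  Config.value_scale c t

theorem val_flatMap {ι : Type*} (L : List ι) (g : ι → Config) :
    S.val (L.flatMap g) = (L.map fun i => S.val (g i)).sum :=
  Config.value_flatMap L g

variable {S} {E A A' : Finset ℕ} {d l m n : ℕ} {L : List (Finset ℕ)} {w : ℝ}

namespace IsSplitting

theorem isControlled_flatMap (h : S.IsSplitting E A d l L A') (hW : ∀ i ∈ A', l ≤ S.W i)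
    {g : Finset ℕ → Config}
    (hg : ∀ F ∈ L, S.IsControlled A' F (budget S.p S.W F (d + 1)) n (g F)) :
    S.IsControlled A E (budget S.p S.W E d) (l * n) (L.flatMap g) := by
  have hflat := Config.IsControlled.flatMap h.isSuccessive h.subset_node S.monotone_p hg
  exact hflat.mono S.monotone_p h.subset hflat.inHull (fun i hi => sum_budget_le h.isSuccessive
    h.subset_node (h.one_le_cutCount i hi) (h.depth_lt i hi) (h.length_le.trans (hW i hi)))
    (Nat.mul_le_mul_right n h.length_le)

theorem exists_norm_proj_le_of_crudeEstimate (h : S.IsSplitting E A d l L A')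
    (hC : S.CrudeEstimate n) (hL : ∀ F ∈ L, F.card < n) (hW : ∀ i ∈ A', l ≤ S.W i) :
    ∃ c, S.IsControlled A E (budget S.p S.W E d) l c ∧
      N (proj E (S.part A)) ≤ (flog l)⁻¹ * (5 * S.val c) + S.loss E A d := by
  choose! g hg hval using fun F hF => hC F A' (d + 1) (hL F hF)
  refine ⟨L.flatMap g, by simpa only [mul_one] using h.isControlled_flatMap hW hg, ?_⟩
  have hsum : normSum N L (S.part A') ≤
      5 * S.val (L.flatMap g) + (L.map fun F => S.loss F A' (d + 1)).sum := by
    rw [val_flatMap, ← List.sum_map_mul_left, ← List.sum_map_add]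
    exact List.sum_le_sum hval
  have havg := mul_le_mul_of_nonneg_left hsum (inv_nonneg.mpr (flog_nonneg l))
  rw [mul_add] at havg
  have hnorm := h.norm_le
  rw [avg] at hnorm
  linarith [S.sum_loss_le A' h.two_le h.isSuccessive h.subset_node d,
    S.loss_sdiff_add_loss E h.subset d]

end IsSplitting

theorem CrudeEstimate.succ (hN : IsSchlumprechtNorm N) (hC : S.CrudeEstimate n)
    (hR : S.RefinedEstimate n) : S.CrudeEstimate (n + 1) := by
  intro E A d hE
  rcases S.exists_isControlled_or_isSplitting hN E A d with ⟨c, hc, hval⟩ | ⟨l, L, A', h⟩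
  · exact ⟨c, hc, by linarith [hc.val_nonneg hN.1]⟩
  by_cases hM : ∃ i ∈ A', S.M i ≤ l
  · obtain ⟨i, -, hi⟩ := hM
    have hl : S.M 0 ≤ l := (S.strictMono_M.monotone i.zero_le).trans hi
    obtain ⟨c, hc, hval⟩ := h.exists_isControlled_avg_le hN hR hE hl
    have hscale := hc.scale hN (zero_le_one.trans S.one_le_C) (by norm_num)
    refine ⟨c.scale (flog (4 : ℕ))⁻¹, hscale.mono S.monotone_p h.subset hscale.inHull
      (fun _ _ => le_rfl) le_rfl, ?_⟩
    have hfour : (2 : ℝ) / 5 ≤ (flog (4 : ℕ))⁻¹ := by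
      rw [le_inv_comm₀ (by norm_num) (flog_pos (by norm_num))]
      norm_num [flog_four_le]
    have hconst := mul_le_mul_of_nonneg_right (S.refinedConst_le_two hl) (hc.val_nonneg hN.1)
    have hweight := mul_le_mul_of_nonneg_right hfour (hc.val_nonneg hN.1)
    rw [val_scale]
    linarith [h.norm_le, S.loss_sdiff_add_loss E h.subset d]
  · push Not at hM
    obtain ⟨c, hc, hval⟩ := h.exists_norm_proj_le_of_crudeEstimate hC (h.card_lt hE)
      fun i hi => (hM i hi).le.trans (S.M_le_W i)
    refine ⟨c.scale (flog l)⁻¹, hc.scale hN (zero_le_one.trans S.one_le_C) h.two_le, ?_⟩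
    rwa [val_scale, mul_left_comm]

variable (S) in
/-- The estimate of a weighted node by a configuration with `k` pieces, with constant close to `1`,
and a second one with `k'` pieces, with a small constant. -/
def HasMixedEstimate (m : ℕ) (E A : Finset ℕ) (d : ℕ) (w : ℝ) (k k' : ℕ) : Prop :=
  ∃ c c', S.IsControlled A E (budget S.p S.W E d) k c ∧
    S.IsControlled A E (budget S.p S.W E d) k' c' ∧
    w * N (proj E (S.part A)) ≤
      (1 + 104 / √(flog m)) * S.val c + 5 / √(flog m) * S.val c' + w * S.loss E A d

theorem HasMixedEstimate.mono {k₁ k₂ k₁' k₂' : ℕ} (h : S.HasMixedEstimate m E A d w k₁ k₁')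
    (hk : k₁ ≤ k₂) (hk' : k₁' ≤ k₂') : S.HasMixedEstimate m E A d w k₂ k₂' := by
  obtain ⟨c, c', hc, hc', hval⟩ := h
  exact ⟨c, c', hc.mono S.monotone_p subset_rfl hc.inHull (fun _ _ => le_rfl) hk,
    hc'.mono S.monotone_p subset_rfl hc'.inHull (fun _ _ => le_rfl) hk', hval⟩

theorem hasMixedEstimate_of_norm_proj_le (hN : IsNormC00 N) (hw : 0 ≤ w) {t : ℝ}
    (ht : w * t ≤ 1 + 104 / √(flog m)) {k : ℕ} {c : Config}
    (hc : S.IsControlled A E (budget S.p S.W E d) k c)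
    (hval : N (proj E (S.part A)) ≤ t * S.val c + S.loss E A d) :
    S.HasMixedEstimate m E A d w k 0 := by
  refine ⟨c, [], hc, .nil, ?_⟩
  have hw := mul_le_mul_of_nonneg_left hval hw
  have ht := mul_le_mul_of_nonneg_right ht (hc.val_nonneg hN)
  rw [show S.val [] = 0 from Config.value_nil, mul_zero, add_zero]
  linarith

namespace IsSplitting

theorem hasMixedEstimate_of_children (h : S.IsSplitting E A d l L A') (hw : 0 ≤ w)
    (hW : ∀ i ∈ A', l ≤ S.W i) {k k' : ℕ}
    (hchild : ∀ F ∈ L, S.HasMixedEstimate m F A' (d + 1) (w * (flog l)⁻¹) k k') :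
    S.HasMixedEstimate m E A d w (l * k) (l * k') := by
  choose! g g' hg hg' hval using hchild
  refine ⟨L.flatMap g, L.flatMap g', h.isControlled_flatMap hW hg, h.isControlled_flatMap hW hg',
    ?_⟩
  have hsum : w * (flog l)⁻¹ * normSum N L (S.part A') ≤
      (1 + 104 / √(flog m)) * S.val (L.flatMap g) + 5 / √(flog m) * S.val (L.flatMap g') +
        w * (flog l)⁻¹ * (L.map fun F => S.loss F A' (d + 1)).sum := by
    simp only [val_flatMap, normSum, ← List.sum_map_mul_left, ← List.sum_map_add]
    exact List.sum_le_sum hval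
  have hnorm := mul_le_mul_of_nonneg_left h.norm_le hw
  have hloss := mul_le_mul_of_nonneg_left
    (S.sum_loss_le A' h.two_le h.isSuccessive h.subset_node d) hw
  rw [avg, mul_add, ← mul_assoc] at hnorm
  rw [← S.loss_sdiff_add_loss E h.subset d]
  linarith

/-- If `f l` is comparable to `f m`, then the weight `1 / f l` compensates the crude constant. -/
theorem hasMixedEstimate_of_flog_le (h : S.IsSplitting E A d l L A') (hN : IsNormC00 N)
    (hC : S.CrudeEstimate n) (hL : ∀ F ∈ L, F.card < n) (hA : ∀ i ∈ A, m < S.M i) (hw : 0 ≤ w)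
    (hw1 : w ≤ 1) (hm : 0 < √(flog m)) (hlow : √(flog m) ≤ flog l)
    (hhigh : flog l ≤ 4 * flog m) : S.HasMixedEstimate m E A d w 0 ((m + 1) ^ 4) := by
  have hl := le_pow_four_of_flog_le hhigh
  obtain ⟨c, hc, hval⟩ := h.exists_norm_proj_le_of_crudeEstimate hC hL fun i hi =>
    hl.trans ((Nat.pow_le_pow_left (hA i (h.subset hi)) 4).trans (S.pow_four_le_W i))
  refine ⟨[], c, .nil,
    hc.mono S.monotone_p subset_rfl hc.inHull (fun _ _ => le_rfl) hl, ?_⟩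
  have hweight : w * (flog l)⁻¹ ≤ 1 * (√(flog m))⁻¹ :=
    mul_le_mul hw1 (inv_anti₀ hm hlow) (inv_nonneg.mpr (flog_nonneg l)) zero_le_one
  have hval' := mul_le_mul_of_nonneg_left hval hw
  have hweight' := mul_le_mul_of_nonneg_right hweight (hc.val_nonneg hN)
  rw [show S.val [] = 0 from Config.value_nil, mul_zero, zero_add, div_eq_mul_inv]
  linarith

theorem hasMixedEstimate_of_lt_flog (h : S.IsSplitting E A d l L A') (hN : IsSchlumprechtNorm N)
    (hR : S.RefinedEstimate n) (hE : E.card < n + 1) (hw : 0 ≤ w) (hw1 : w ≤ 1)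
    (hm : S.M 0 ≤ m) (hl : 4 * flog m < flog l) : S.HasMixedEstimate m E A d w 4 0 := by
  have hml : m ≤ l := by
    by_contra hlt
    linarith [flog_natCast_mono (not_le.mp hlt).le, flog_nonneg m]
  obtain ⟨c, hc, hval⟩ := h.exists_isControlled_avg_le hN hR hE (hm.trans hml)
  have hpos : 0 < √(flog m) := by linarith [S.sqrt_flog_ge hm]
  have hconst : refinedConst l ≤ 1 + 104 / √(flog m) := by
    have hsqrt : 2 * √(flog m) ≤ √(flog l) :=
      Real.le_sqrt_of_sq_le (by rw [mul_pow, Real.sq_sqrt (flog_nonneg m)]; linarith)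
    have hdiv : 208 / √(flog l) ≤ 208 / (2 * √(flog m)) := by gcongr
    have hhalf : 208 / (2 * √(flog m)) = 104 / √(flog m) := by
      rw [← div_div]
      norm_num
    rw [refinedConst]
    linarith
  refine hasMixedEstimate_of_norm_proj_le hN.1 hw (t := refinedConst l) ?_
    (hc.mono S.monotone_p h.subset hc.inHull (fun _ _ => le_rfl) le_rfl) ?_
  · exact (mul_le_of_le_one_left (zero_le_one.trans (one_le_refinedConst l)) hw1).trans hconst
  · linarith [h.norm_le, S.loss_sdiff_add_loss E h.subset d]

end IsSplitting

/-- The tree is expanded to depth `g`, as long as `l` is small. Each small node contributes a factor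
`1 / f l ≤ 2 / 3` to the weight, and after four of them the weight compensates the crude constant:
`5 * (2 / 3) ^ 4 ≤ 1`. -/
theorem hasMixedEstimate (hN : IsSchlumprechtNorm N) (hC : S.CrudeEstimate (n + 1))
    (hR : S.RefinedEstimate n) (hm : S.M 0 ≤ m) {B : ℕ} (hB : 1 ≤ B) (hBm : B ≤ m)
    (hBl : ∀ l, B < l → √(flog m) ≤ flog l) {g : ℕ} (hg : g ≤ 4) (hE : E.card < n + 1)
    (hA : ∀ i ∈ A, m < S.M i) (hw : 0 ≤ w) (hwg : w * (3 / 2) ^ (4 - g) ≤ 1) :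
    S.HasMixedEstimate m E A d w (4 * B ^ g) (B ^ g * (m + 1) ^ 4) := by
  have hsqrt := S.sqrt_flog_ge hm
  have hone : 1 ≤ 1 + 104 / √(flog m) := le_add_of_nonneg_right (by positivity)
  induction g generalizing E A d w with
  | zero =>
    obtain ⟨c, hc, hval⟩ := hC E A d hE
    refine (hasMixedEstimate_of_norm_proj_le hN.1 hw ?_ hc hval).mono (by norm_num) (Nat.zero_le _)
    norm_num at hwg
    linarith
  | succ g ih =>
    have hBg : 1 ≤ B ^ (g + 1) := Nat.one_le_pow _ _ hB
    have hw1 : w ≤ 1 := (le_mul_of_one_le_right hw (one_le_pow₀ (by norm_num))).trans hwg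
    rcases S.exists_isControlled_or_isSplitting hN E A d with ⟨c, hc, hval⟩ | ⟨l, L, A', h⟩
    · refine (hasMixedEstimate_of_norm_proj_le hN.1 hw (t := 1) ?_ hc ?_).mono
        (hBg.trans (Nat.le_mul_of_pos_left _ four_pos)) (Nat.zero_le _)
      · linarith
      · rwa [one_mul]
    rcases le_or_gt l B with hlB | hlB
    · have hweight : w * (flog l)⁻¹ * (3 / 2) ^ (4 - g) ≤ 1 := by
        rw [show 4 - g = 4 - (g + 1) + 1 by omega]
        exact mul_inv_flog_mul_pow_succ_le_one h.two_le hwg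
      refine (h.hasMixedEstimate_of_children hw
        (fun i hi => (hlB.trans hBm).trans ((hA i (h.subset hi)).le.trans (S.M_le_W i)))
        fun F hF => ih (by omega) ((Finset.card_lt_card (h.ssubset F hF)).trans hE)
          (fun i hi => hA i (h.subset hi)) (mul_nonneg hw (inv_nonneg.mpr (flog_nonneg l)))
          hweight).mono ?_ ?_
      · calc l * (4 * B ^ g) ≤ B * (4 * B ^ g) := Nat.mul_le_mul_right _ hlB
          _ = 4 * B ^ (g + 1) := by ring
      · calc l * (B ^ g * (m + 1) ^ 4) ≤ B * (B ^ g * (m + 1) ^ 4) := Nat.mul_le_mul_right _ hlB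
          _ = B ^ (g + 1) * (m + 1) ^ 4 := by ring
    rcases le_or_gt (flog l) (4 * flog m) with hlm | hlm
    · exact (h.hasMixedEstimate_of_flog_le hN.1 hC
        (fun F hF => (Finset.card_lt_card (h.ssubset F hF)).trans hE) hA hw hw1 (by linarith)
        (hBl l hlB) hlm).mono (Nat.zero_le _) (Nat.le_mul_of_pos_left _ hBg)
    · exact (h.hasMixedEstimate_of_lt_flog hN hR hE hw hw1 hm hlm).mono
        (Nat.le_mul_of_pos_right 4 hBg) (Nat.zero_le _)

end BlockCombination

theorem exists_le_sqrt_flog_lt {m : ℕ} (hm : 1 ≤ √(flog m)) : ∃ B : ℕ, 1 ≤ B ∧ B ≤ m ∧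
    flog B ≤ √(flog m) ∧ ∀ l, B < l → √(flog m) ≤ flog l := by
  have hm1 : 1 ≤ m := by
    by_contra h
    obtain rfl : m = 0 := by omega
    norm_num [flog] at hm
  have hone : flog (1 : ℕ) ≤ √(flog m) := by rwa [Nat.cast_one, flog_one]
  refine ⟨Nat.findGreatest (fun B : ℕ => flog B ≤ √(flog m)) m, Nat.le_findGreatest hm1 hone,
    Nat.findGreatest_le m,
    Nat.findGreatest_spec (P := fun B : ℕ => flog B ≤ √(flog m)) hm1 hone, fun l hl => ?_⟩
  rcases le_or_gt l m with hlm | hlm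
  · exact (not_le.mp (Nat.findGreatest_is_greatest
      (P := fun B : ℕ => flog B ≤ √(flog m)) hl hlm)).le
  · have hsq := Real.sq_sqrt (flog_nonneg m)
    nlinarith [flog_natCast_mono hlm.le]

theorem refined_constant_le {r f₁ f₂ v₁ v₂ v : ℝ} (hr : 208 ≤ r) (hf₁ : f₁ ≤ r ^ 2 + 4 * r + 7 / 2)
    (hf₂ : f₂ ≤ 5 * r ^ 2 + 4 * r + 12) (h₁ : 0 ≤ f₁) (h₂ : 0 ≤ f₂) (hv₁ : v₁ ≤ v) (hv₂ : v₂ ≤ v)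
    (hv : 0 ≤ v) :
    (1 + 104 / r) * (f₁ * v₁) + 5 / r * (f₂ * v₂) ≤ r ^ 2 * ((1 + 208 / r) * v) := by
  have hrpos : 0 < r := by linarith
  have hpoly : (1 + 104 / r) * (r ^ 2 + 4 * r + 7 / 2) + 5 / r * (5 * r ^ 2 + 4 * r + 12) ≤
      r ^ 2 * (1 + 208 / r) := by
    rw [← sub_nonneg]
    have : 0 ≤ (75 * r ^ 2 - 879 / 2 * r - 424) / r := div_nonneg (by nlinarith) hrpos.le
    convert this using 1
    field_simp
    ring
  calc (1 + 104 / r) * (f₁ * v₁) + 5 / r * (f₂ * v₂)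
      ≤ (1 + 104 / r) * ((r ^ 2 + 4 * r + 7 / 2) * v) +
          5 / r * ((5 * r ^ 2 + 4 * r + 12) * v) := by
        refine add_le_add (mul_le_mul_of_nonneg_left ?_ (by positivity))
          (mul_le_mul_of_nonneg_left ?_ (by positivity))
        · exact (mul_le_mul_of_nonneg_left hv₁ h₁).trans (mul_le_mul_of_nonneg_right hf₁ hv)
        · exact (mul_le_mul_of_nonneg_left hv₂ h₂).trans (mul_le_mul_of_nonneg_right hf₂ hv)
    _ = ((1 + 104 / r) * (r ^ 2 + 4 * r + 7 / 2) + 5 / r * (5 * r ^ 2 + 4 * r + 12)) * v := by ring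
    _ ≤ r ^ 2 * (1 + 208 / r) * v := mul_le_mul_of_nonneg_right hpoly hv
    _ = _ := by ring

theorem flog_pieces_le {B m : ℕ} {r : ℝ} (hB : flog B ≤ r) (hm : flog m = r ^ 2) :
    flog (m * (4 * B ^ 4) : ℕ) ≤ r ^ 2 + 4 * r + 7 / 2 := by
  have hfour := flog_four_le
  have h₁ := flog_mul_le m (4 * B ^ 4)
  have h₂ := flog_mul_le 4 (B ^ 4)
  have h₃ := flog_pow_le B 4
  push_cast at *
  linarith

theorem flog_mixed_pieces_le {B m : ℕ} {r : ℝ} (hm1 : 1 ≤ m) (hB : flog B ≤ r)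
    (hm : flog m = r ^ 2) :
    flog (m * (B ^ 4 * (m + 1) ^ 4) : ℕ) ≤ 5 * r ^ 2 + 4 * r + 12 := by
  have hsucc : flog (m + 1 : ℕ) ≤ 5 / 2 + r ^ 2 := by
    have := flog_natCast_mono (show m + 1 ≤ 4 * m by omega)
    have := flog_mul_le 4 m
    have := flog_four_le
    push_cast at *
    linarith
  have h₁ := flog_mul_le m (B ^ 4 * (m + 1) ^ 4)
  have h₂ := flog_mul_le (B ^ 4) ((m + 1) ^ 4)
  have h₃ := flog_pow_le B 4
  have h₄ := flog_pow_le (m + 1) 4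
  push_cast at *
  linarith

namespace BlockCombination

variable {N : c00 → ℝ} {S : BlockCombination N} {n : ℕ}

theorem isControlled_scale_flatMap (hN : IsSchlumprechtNorm N) {E A : Finset ℕ} {d m k : ℕ}
    {L : List (Finset ℕ)} (hL : IsSuccessive L) (hlen : L.length ≤ m) (hLE : ∀ F ∈ L, F ⊆ E)
    (hmk : 2 ≤ m * k) {g : Finset ℕ → Config}
    (hg : ∀ F ∈ L, S.IsControlled A F (budget S.p S.W F d) k (g F)) :
    S.IsControlled A E (fun i => (L.map fun F => budget S.p S.W F d i).sum) 1
      (Config.scale (flog (m * k : ℕ))⁻¹ (L.flatMap g)) := by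
  have hflat := Config.IsControlled.flatMap hL hLE S.monotone_p hg
  exact (hflat.mono S.monotone_p subset_rfl hflat.inHull (fun _ _ => le_rfl)
    (Nat.mul_le_mul_right k hlen)).scale hN (zero_le_one.trans S.one_le_C) hmk

theorem exists_isControlled_avg_le_of_hasMixedEstimate (hN : IsSchlumprechtNorm N)
    {E A : Finset ℕ} {d m k k' : ℕ} {L : List (Finset ℕ)} (hL : IsSuccessive L)
    (hlen : L.length ≤ m) (hLE : ∀ F ∈ L, F ⊆ E) (hm : S.M 0 ≤ m) (hk : 1 ≤ k) (hk' : 1 ≤ k')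
    (hfk : flog (m * k : ℕ) ≤ √(flog m) ^ 2 + 4 * √(flog m) + 7 / 2)
    (hfk' : flog (m * k' : ℕ) ≤ 5 * √(flog m) ^ 2 + 4 * √(flog m) + 12)
    (h : ∀ F ∈ L, S.HasMixedEstimate m F A d 1 k k') :
    ∃ c, S.IsControlled A E (fun i => (L.map fun F => budget S.p S.W F d i).sum) 1 c ∧
      S.avg m L A ≤ refinedConst m * S.val c + (flog m)⁻¹ * (L.map fun F => S.loss F A d).sum := by
  have hm2 : 2 ≤ m := (S.two_le_M 0).trans hm
  choose! g g' hg hg' hval using h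
  have hmk : 2 ≤ m * k := hm2.trans (Nat.le_mul_of_pos_right m hk)
  have hmk' : 2 ≤ m * k' := hm2.trans (Nat.le_mul_of_pos_right m hk')
  have hc := isControlled_scale_flatMap hN hL hlen hLE hmk hg
  have hc' := isControlled_scale_flatMap hN hL hlen hLE hmk' hg'
  have hscale {j : ℕ} (hj : 2 ≤ j) (q : Config) :
      S.val q = flog j * S.val (q.scale (flog j)⁻¹) := by
    rw [val_scale, mul_inv_cancel_left₀ (flog_pos hj).ne']
  set c := Config.scale (flog (m * k : ℕ))⁻¹ (L.flatMap g)
  set c' := Config.scale (flog (m * k' : ℕ))⁻¹ (L.flatMap g')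
  have hsum : normSum N L (S.part A) ≤ (1 + 104 / √(flog m)) * S.val (L.flatMap g) +
      5 / √(flog m) * S.val (L.flatMap g') + (L.map fun F => S.loss F A d).sum := by
    simp only [one_mul] at hval
    simp only [val_flatMap, normSum, ← List.sum_map_mul_left, ← List.sum_map_add]
    exact List.sum_le_sum hval
  have hconst := refined_constant_le (S.sqrt_flog_ge hm) hfk hfk' (flog_nonneg _) (flog_nonneg _)
    (le_max_left (S.val c) (S.val c')) (le_max_right _ _)
    ((hc.val_nonneg hN.1).trans (le_max_left _ _))
  have havg : S.avg m L A ≤ refinedConst m * max (S.val c) (S.val c') +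
      (flog m)⁻¹ * (L.map fun F => S.loss F A d).sum := by
    rw [Real.sq_sqrt (flog_nonneg m)] at hconst
    rw [avg, inv_mul_le_iff₀ (flog_pos hm2), mul_add, mul_inv_cancel_left₀ (flog_pos hm2).ne']
    rw [hscale hmk (L.flatMap g), hscale hmk' (L.flatMap g')] at hsum
    exact hsum.trans (add_le_add_left hconst _)
  rcases max_choice (S.val c) (S.val c') with hmax | hmax <;> rw [hmax] at havg
  exacts [⟨c, hc, havg⟩, ⟨c', hc', havg⟩]

theorem RefinedEstimate.succ (hN : IsSchlumprechtNorm N) (hC : S.CrudeEstimate (n + 1))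
    (hR : S.RefinedEstimate n) : S.RefinedEstimate (n + 1) := by
  intro m E A d L hm hA hL hlen hLE hcard
  have hm1 : 1 ≤ m := one_le_two.trans ((S.two_le_M 0).trans hm)
  have hsq : flog m = √(flog m) ^ 2 := (Real.sq_sqrt (flog_nonneg m)).symm
  obtain ⟨B, hB, hBm, hfB, hBl⟩ := exists_le_sqrt_flog_lt (m := m) (by linarith [S.sqrt_flog_ge hm])
  exact exists_isControlled_avg_le_of_hasMixedEstimate hN hL hlen hLE hm
    (Nat.mul_pos four_pos (Nat.pow_pos hB)) (Nat.mul_pos (Nat.pow_pos hB) (Nat.pow_pos m.succ_pos))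
    (flog_pieces_le hfB hsq) (flog_mixed_pieces_le hm1 hfB hsq) fun F hF =>
      hasMixedEstimate hN hC hR hm hB hBm hBl le_rfl (hcard F hF) hA zero_le_one (by norm_num)

variable (S) in
theorem crudeEstimate_and_refinedEstimate (hN : IsSchlumprechtNorm N) (n : ℕ) :
    S.CrudeEstimate n ∧ S.RefinedEstimate n := by
  induction n with
  | zero =>
    refine ⟨fun E A d hE => absurd hE (Nat.not_lt_zero _), fun l E A d L _ _ _ _ _ hcard => ?_⟩
    obtain rfl := List.eq_nil_iff_forall_not_mem.mpr fun F hF => Nat.not_lt_zero _ (hcard F hF)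
    exact ⟨[], .nil, by simp [avg, normSum_nil, val, Config.value_nil]⟩
  | succ n ih =>
    have hC := ih.1.succ hN ih.2
    exact ⟨hC, ih.2.succ hN hC⟩

variable (S) in
theorem exists_isControlled_norm_le (hN : IsSchlumprechtNorm N) : ∃ (E : Finset ℕ) (c : Config),
    S.IsControlled S.a.support E (fun i => 2 * i * S.W i + 1) 1 c ∧
      N (S.part S.a.support) ≤
        5 * S.val c + ∑ i ∈ S.a.support, 2 * (|S.a i| * (2 / 3) ^ i) := by
  set E := (S.part S.a.support).support
  obtain ⟨c, hc, hval⟩ :=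
    (S.crudeEstimate_and_refinedEstimate hN (E.card + 1)).1 E S.a.support 0 (Nat.lt_succ_self _)
  refine ⟨E, c, hc.mono S.monotone_p subset_rfl hc.inHull (fun i _ => ?_) le_rfl, ?_⟩
  · have hcut := cutCount_le_two S.p i E
    rw [budget, Nat.sub_zero]
    gcongr
    split_ifs <;> omega
  · rw [proj_eq_self subset_rfl] at hval
    refine hval.trans (add_le_add_right (Finset.sum_le_sum fun i _ => ?_) _)
    rw [pow_zero, mul_one]
    gcongr
    exact_mod_cast cutCount_le_two S.p i E

end BlockCombination

/-! ### Transfer to another sequence -/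

/-- Every successive family of at most `K` nonempty sets has a successive family of counterparts on
which `z'` has, up to `ε`, at least the norms of `z` on the original sets. -/
def HasCounterparts (N : c00 → ℝ) (K : ℕ) (ε : ℝ) (z z' : c00) : Prop :=
  ∀ L : List (Finset ℕ), IsSuccessive L → (∀ F ∈ L, F.Nonempty) → L.length ≤ K →
    ∃ G : Finset ℕ → Finset ℕ, (∀ F ∈ L, N (proj F z) ≤ N (proj (G F) z') + ε) ∧
      ∀ F ∈ L, ∀ F' ∈ L, FLt F F' → FLt (G F) (G F')

namespace Config

/-- The configuration with each set `F` replaced by `G F`. -/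
def mapSets (G : Finset ℕ → Finset ℕ) (c : Config) : Config := c.map fun k => (G k.1, k.2)

theorem sets_mapSets (G : Finset ℕ → Finset ℕ) (c : Config) :
    (c.mapSets G).sets = c.sets.map G := by
  simp [sets, mapSets, Function.comp_def]

theorem weights_mapSets (G : Finset ℕ → Finset ℕ) (c : Config) :
    (c.mapSets G).weights = c.weights := by
  simp [weights, mapSets, Function.comp_def]

theorem value_le_value_mapSets_add {N : c00 → ℝ} {C : ℝ} {x y : c00} {c : Config}
    {G : Finset ℕ → Finset ℕ} {e : Finset ℕ → ℝ} (hw : ∀ w ∈ c.weights, 0 ≤ w ∧ w ≤ C)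
    (he : ∀ F, 0 ≤ e F) (hG : ∀ F ∈ c.sets, N (proj F x) ≤ N (proj (G F) y) + e F) :
    c.value N x ≤ (c.mapSets G).value N y + C * (c.sets.map e).sum := by
  simp only [value, mapSets, sets, List.map_map, ← List.sum_map_mul_left, ← List.sum_map_add]
  refine List.sum_le_sum fun k hk => ?_
  obtain ⟨hnonneg, hle⟩ := hw k.2 (List.mem_map_of_mem hk)
  have hmul := mul_le_mul_of_nonneg_left (hG k.1 (List.mem_map_of_mem hk)) hnonneg
  have herr := mul_le_mul_of_nonneg_right hle (he k.1)
  simp only [Function.comp_apply]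
  linarith

end Config

theorem sum_map_le_sum_countP {p : ℕ → ℕ} {A : Finset ℕ} {L : List (Finset ℕ)}
    {ι : Finset ℕ → ℕ} (hι : ∀ F ∈ L, ι F ∈ A ∧ F ⊆ block p (ι F)) {t : ℕ → ℝ} (ht : ∀ i, 0 ≤ t i) :
    (L.map fun F => t (ι F)).sum ≤ ∑ i ∈ A, (L.countP fun F => F ⊆ block p i : ℕ) * t i := by
  induction L with
  | nil => simp
  | cons F L ih =>
    obtain ⟨⟨hF, hFi⟩, hL⟩ := List.forall_mem_cons.mp hι
    have hhead : t (ι F) ≤ ∑ i ∈ A, if F ⊆ block p i then t i else 0 :=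
      (if_pos hFi).ge.trans (Finset.single_le_sum
        (f := fun i => if F ⊆ block p i then t i else 0)
        (fun i _ => by split_ifs <;> simp [ht]) hF)
    simp only [List.map_cons, List.sum_cons, List.countP_cons, decide_eq_true_eq, Nat.cast_add,
      Nat.cast_ite, Nat.cast_one, Nat.cast_zero, add_mul, ite_mul, one_mul, zero_mul,
      Finset.sum_add_distrib]
    linarith [ih hL]

namespace Config.IsControlled

variable {N : c00 → ℝ} {C : ℝ} {p p' : ℕ → ℕ} {A E : Finset ℕ} {b : ℕ → ℕ} {n : ℕ} {c : Config}
  {u v : ℕ → c00} {η : ℕ → ℝ}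

/-- Inside each block the sets are replaced by their counterparts. -/
theorem exists_map_sets (h : IsControlled N C p A E b n c) (hp : Monotone p)
    (hp' : Monotone p') (hv : ∀ i, (v i).support ⊆ block p' i)
    (huv : ∀ i ∈ A, HasCounterparts N (b i) (η i) (u i) (v i)) :
    ∃ (ι : Finset ℕ → ℕ) (G : Finset ℕ → Finset ℕ),
      (∀ F ∈ c.sets, ι F ∈ A ∧ F ⊆ block p (ι F)) ∧
      (∀ F ∈ c.sets, G F ⊆ block p' (ι F) ∧
        N (proj F (u (ι F))) ≤ N (proj (G F) (v (ι F))) + η (ι F)) ∧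
      IsSuccessive (c.sets.map G) := by
  choose! ι hι using h.subset_block
  let inBlock (i : ℕ) : List (Finset ℕ) := c.sets.filter fun F => F ⊆ block p i
  have hcounter : ∀ i ∈ A, ∃ G : Finset ℕ → Finset ℕ,
      (∀ F ∈ inBlock i, N (proj F (u i)) ≤ N (proj (G F) (v i)) + η i) ∧
      ∀ F ∈ inBlock i, ∀ F' ∈ inBlock i, FLt F F' → FLt (G F) (G F') := fun i hi =>
    huv i hi _ (h.isSuccessive.filter _) (fun F hF => h.nonempty F (List.mem_of_mem_filter hF))
      (by rw [← List.countP_eq_length_filter]; exact h.count_le i hi)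
  choose! g hg using hcounter
  have hmem : ∀ F ∈ c.sets, F ∈ inBlock (ι F) := fun F hF =>
    List.mem_filter.mpr ⟨hF, decide_eq_true (hι F hF).2⟩
  refine ⟨ι, fun F => g (ι F) F ∩ block p' (ι F), hι,
    fun F hF => ⟨Finset.inter_subset_right, ?_⟩, ?_⟩
  · rw [← proj_proj, proj_eq_self (hv _)]
    exact (hg _ (hι F hF).1).1 F (hmem F hF)
  · refine List.pairwise_map.mpr (h.isSuccessive.imp_of_mem fun {F F'} hF hF' hFF' => ?_)
    have hle : ι F ≤ ι F' := by
      by_contra! hgt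
      exact hFF'.asymm (h.nonempty F hF) (h.nonempty F' hF')
        ((block_FLt_block hp hgt).mono (hι F' hF').2 (hι F hF).2)
    rcases hle.lt_or_eq with hlt | heq
    · exact (block_FLt_block hp' hlt).mono Finset.inter_subset_right Finset.inter_subset_right
    · refine FLt.mono ?_ Finset.inter_subset_left Finset.inter_subset_left
      have hF'mem := hmem F' hF'
      rw [← heq] at hF'mem ⊢
      exact (hg _ (hι F hF).1).2 F (hmem F hF) F' hF'mem hFF'

theorem value_le (h : IsControlled N C p A E b 1 c) (hN : IsSchlumprechtNorm N) (hC : 0 ≤ C)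
    (hp : Monotone p) (hu : ∀ i, (u i).support ⊆ block p i)
    (hp' : Monotone p') (hv : ∀ i, (v i).support ⊆ block p' i) (hη : ∀ i, 0 ≤ η i)
    (huv : ∀ i ∈ A, HasCounterparts N (b i) (η i) (u i) (v i)) (a : ℕ → ℝ) :
    c.value N (∑ i ∈ A, a i • u i) ≤
      C * N (∑ i ∈ A, a i • v i) + C * ∑ i ∈ A, b i * (|a i| * η i) := by
  obtain ⟨ι, G, hι, hG, hsucc⟩ := h.exists_map_sets hp hp' hv huv
  set y := ∑ i ∈ A, a i • v i
  have hset : ∀ F ∈ c.sets,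
      N (proj F (∑ i ∈ A, a i • u i)) ≤ N (proj (G F) y) + |a (ι F)| * η (ι F) := fun F hF => by
    obtain ⟨hFA, hFi⟩ := hι F hF
    rw [proj_sum_smul_of_subset_block hp hu a A hFi, if_pos hFA, hN.1.map_smul,
      proj_sum_smul_of_subset_block hp' hv a A (hG F hF).1, if_pos hFA, hN.1.map_smul, ← mul_add]
    exact mul_le_mul_of_nonneg_left (hG F hF).2 (abs_nonneg _)
  have herr : (c.sets.map fun F => |a (ι F)| * η (ι F)).sum ≤ ∑ i ∈ A, b i * (|a i| * η i) := by
    have ht : ∀ i, 0 ≤ |a i| * η i := fun i => mul_nonneg (abs_nonneg _) (hη i)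
    refine (sum_map_le_sum_countP hι ht).trans (Finset.sum_le_sum fun i hi => ?_)
    exact mul_le_mul_of_nonneg_right (Nat.cast_le.mpr (h.count_le i hi)) (ht i)
  have himage : (c.mapSets G).value N y ≤ C * N y := by
    obtain ⟨L, hL, hlen, -, hval⟩ := h.isAdmissible (c.mapSets G) (weights_mapSets G c)
      (by rwa [sets_mapSets])
    refine (hval y).trans (mul_le_mul_of_nonneg_left ?_ hC)
    match L, hlen with
    | [], _ => exact hN.1.nonneg y
    | [E'], _ =>
      rw [normSum_cons, normSum_nil, add_zero]
      exact hN.map_proj_le E' y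
  refine (value_le_value_mapSets_add (fun w hw => ⟨h.weight_nonneg w hw,
    h.isAdmissible.weight_le hN hC hw⟩) (fun F => mul_nonneg (abs_nonneg _) (hη _)) hset).trans ?_
  exact add_le_add himage (mul_le_mul_of_nonneg_left herr hC)

end Config.IsControlled

theorem sum_mul_pow_le {A : Finset ℕ} {b : ℕ → ℝ} {B r : ℝ} (hb : ∀ i ∈ A, b i ≤ B) (hB : 0 ≤ B)
    (hr : 0 ≤ r) (hr1 : r < 1) : ∑ i ∈ A, b i * r ^ i ≤ B * (1 - r)⁻¹ := by
  calc ∑ i ∈ A, b i * r ^ i ≤ ∑ i ∈ A, B * r ^ i :=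
        Finset.sum_le_sum fun i hi => mul_le_mul_of_nonneg_right (hb i hi) (pow_nonneg hr i)
    _ ≤ B * (1 - r)⁻¹ := by
        rw [← Finset.mul_sum, ← tsum_geometric_of_lt_one hr hr1]
        exact mul_le_mul_of_nonneg_left
          ((summable_geometric_of_lt_one hr hr1).sum_le_tsum _ fun i _ => pow_nonneg hr i) hB

/-- Each vector of the combination may be replaced by any normalized vector with the same profile,
since a configuration controlled by the combination uses few sets in each block. -/
theorem BlockCombination.norm_le {N : c00 → ℝ} (S : BlockCombination N)
    (hN : IsSchlumprechtNorm N) {p' : ℕ → ℕ} (hp' : Monotone p') {v : ℕ → c00}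
    (hv : ∀ i, (v i).support ⊆ block p' i) (hv1 : ∀ i, N (v i) = 1) {η : ℕ → ℝ}
    (hη : ∀ i, 0 ≤ η i) (hηle : ∀ i, (2 * i * S.W i + 1 : ℕ) * η i ≤ (1 / 2) ^ i)
    (huv : ∀ i, HasCounterparts N (2 * i * S.W i + 1) (η i) (S.u i) (v i)) :
    N (∑ i ∈ S.a.support, S.a i • S.u i) ≤
      (15 * S.C + 6) * N (∑ i ∈ S.a.support, S.a i • v i) := by
  obtain ⟨E, c, hc, hle⟩ := S.exists_isControlled_norm_le hN
  have hC := S.one_le_C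
  set y := ∑ i ∈ S.a.support, S.a i • v i
  have hcoeff : ∀ i ∈ S.a.support, |S.a i| ≤ N y := fun i hi => by
    have hproj := proj_sum_smul_of_subset_block hp' hv S.a S.a.support (subset_refl (block p' i))
    rw [if_pos hi, proj_eq_self (hv i)] at hproj
    simpa only [y, hproj, hN.1.map_smul, hv1, mul_one] using hN.map_proj_le (block p' i) y
  have hval := hc.value_le hN (zero_le_one.trans hC) S.monotone_p S.support_subset hp' hv hη
    (fun i _ => huv i) S.a
  have herr : ∑ i ∈ S.a.support, ((2 * i * S.W i + 1 : ℕ) : ℝ) * (|S.a i| * η i) ≤ 2 * N y := by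
    have hhalf := sum_mul_pow_le hcoeff (hN.1.nonneg y) (r := 1 / 2) (by norm_num) (by norm_num)
    have hterm : ∀ i ∈ S.a.support, ((2 * i * S.W i + 1 : ℕ) : ℝ) * (|S.a i| * η i) ≤
        |S.a i| * (1 / 2) ^ i := fun i _ => by
      rw [mul_left_comm]
      exact mul_le_mul_of_nonneg_left (hηle i) (abs_nonneg _)
    exact (Finset.sum_le_sum hterm).trans (hhalf.trans_eq (by ring))
  have htail : ∑ i ∈ S.a.support, 2 * (|S.a i| * (2 / 3) ^ i) ≤ 6 * N y := by
    have htwothirds :=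
      sum_mul_pow_le hcoeff (hN.1.nonneg y) (r := 2 / 3) (by norm_num) (by norm_num)
    rw [← Finset.mul_sum]
    linarith
  have hvalY : S.val c ≤ 3 * S.C * N y := by
    refine hval.trans ?_
    nlinarith
  calc _ ≤ 5 * S.val c + _ := hle
    _ ≤ 5 * (3 * S.C * N y) + 6 * N y := by gcongr
    _ = _ := by ring

/-! ### Stabilization -/

theorem HasLargeAverage.mono {N : c00 → ℝ} {z : c00} {l : ℕ} {θ θ' : ℝ}
    (h : HasLargeAverage N z l θ) (hθ : θ' ≤ θ) : HasLargeAverage N z l θ' := by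
  obtain ⟨L, hL, hlen, hlt⟩ := h
  exact ⟨L, hL, hlen, (mul_le_mul_of_nonneg_right hθ (flog_nonneg l)).trans_lt hlt⟩

theorem eventually_not_hasLargeAverage {N : c00 → ℝ} (hN : IsSchlumprechtNorm N) (z : c00) {θ : ℝ}
    (hθ : 0 < θ) : ∀ᶠ l in Filter.atTop, ¬HasLargeAverage N z l θ := by
  filter_upwards [(tendsto_flog_natCast.const_mul_atTop hθ).eventually_ge_atTop
    (∑ k ∈ z.support, N (proj {k} z))] with l hl
  rintro ⟨L, hL, -, hlt⟩
  exact hlt.not_ge ((hN.normSum_le_sum_singleton hL z).trans hl)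

/-- The norms, rounded down to multiples of `ε`, of `z` on the successive families of at most `K`
nonempty sets. -/
def profile (N : c00 → ℝ) (K : ℕ) (ε : ℝ) (z : c00) : Set (List ℕ) :=
  {t | ∃ L, IsSuccessive L ∧ (∀ F ∈ L, F.Nonempty) ∧ L.length ≤ K ∧
    t = L.map fun F => ⌊N (proj F z) / ε⌋₊}

theorem profile_subset {N : c00 → ℝ} (hN : IsSchlumprechtNorm N) {K : ℕ} {ε : ℝ} (hε : 0 ≤ ε)
    {z : c00} (hz : N z ≤ 1) :
    profile N K ε z ⊆ List.map Fin.val '' {t : List (Fin (⌊1 / ε⌋₊ + 1)) | t.length ≤ K} := by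
  rintro - ⟨L, -, -, hlen, rfl⟩
  have hfloor (F : Finset ℕ) : ⌊N (proj F z) / ε⌋₊ < ⌊1 / ε⌋₊ + 1 :=
    Nat.lt_succ_of_le (Nat.floor_mono
      (div_le_div_of_nonneg_right ((hN.map_proj_le F z).trans hz) hε))
  exact ⟨L.map fun F => ⟨_, hfloor F⟩, by simpa using hlen, by simp [Function.comp_def]⟩

theorem hasCounterparts_of_profile_subset {N : c00 → ℝ} (hN : IsNormC00 N) {K : ℕ} {ε : ℝ}
    (hε : 0 < ε) {z z' : c00} (h : profile N K ε z ⊆ profile N K ε z') :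
    HasCounterparts N K ε z z' := by
  intro L hL hne hlen
  obtain ⟨L', hL', -, -, heq⟩ := h ⟨L, hL, hne, hlen, rfl⟩
  have hlenL' : L.length = L'.length := by simpa using congrArg List.length heq
  have hidx {F : Finset ℕ} (hF : F ∈ L) : L.idxOf F < L'.length :=
    (List.idxOf_lt_length_of_mem hF).trans_eq hlenL'
  refine ⟨fun F => L'.getD (L.idxOf F) ∅, fun F hF => ?_, fun F hF F' hF' hFF' => ?_⟩
  · beta_reduce
    have hfloor := List.getElem_of_eq heq (i := L.idxOf F)
      (by simpa using List.idxOf_lt_length_of_mem hF)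
    simp only [List.getElem_map, List.getElem_idxOf] at hfloor
    rw [List.getD_eq_getElem _ _ (hidx hF), ← div_le_div_iff_of_pos_right hε, add_div,
      div_self hε.ne']
    have hge := Nat.floor_le (div_nonneg (hN.nonneg (proj (L'[L.idxOf F]'(hidx hF)) z')) hε.le)
    have hlt := Nat.lt_floor_add_one (N (proj F z) / ε)
    rw [hfloor] at hlt
    linarith
  · beta_reduce
    rw [List.getD_eq_getElem _ _ (hidx hF), List.getD_eq_getElem _ _ (hidx hF')]
    refine List.pairwise_iff_getElem.mp hL' _ _ _ _ ?_
    by_contra! hle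
    have hget {G : Finset ℕ} (hG : G ∈ L) : L[L.idxOf G]'(List.idxOf_lt_length_of_mem hG) = G :=
      List.getElem_idxOf _
    rcases hle.lt_or_eq with hlt | heqIdx
    · have hF'F := List.pairwise_iff_getElem.mp hL _ _ (List.idxOf_lt_length_of_mem hF')
        (List.idxOf_lt_length_of_mem hF) hlt
      rw [hget hF, hget hF'] at hF'F
      exact hFF'.asymm (hne F hF) (hne F' hF') hF'F
    · obtain rfl := (List.idxOf_inj hF').mp heqIdx
      exact hFF'.asymm (hne _ hF) (hne _ hF) hFF'

theorem exists_mem_ultrafilter_hasCounterparts {N : c00 → ℝ} (hN : IsSchlumprechtNorm N)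
    {α : Type*} (U : Ultrafilter α) {x : α → c00} (hx : ∀ n, N (x n) ≤ 1) (K : ℕ) {ε : ℝ}
    (hε : 0 < ε) : ∃ A ∈ U, ∀ n ∈ A, ∀ n' ∈ A, HasCounterparts N K ε (x n) (x n') := by
  have hfinite : (List.map Fin.val ''
      {t : List (Fin (⌊1 / ε⌋₊ + 1)) | t.length ≤ K}).powerset.Finite :=
    ((List.finite_length_le _ K).image _).finite_subsets
  obtain ⟨P, -, hP⟩ := (U.eventually_exists_mem_iff hfinite (P := fun P n =>
    profile N K ε (x n) = P)).mp
      (Filter.Eventually.of_forall fun n => ⟨_, profile_subset hN hε.le (hx n), rfl⟩)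
  exact ⟨_, hP, fun n hn n' hn' =>
    hasCounterparts_of_profile_subset hN.1 hε (hn.trans hn'.symm).subset⟩

theorem exists_seq_of_forall_exists {α : Type*} [Nonempty α] {P : ℕ → α → Prop}
    {r : ℕ → α → α → Prop}
    (h : ∀ (n : ℕ) (s : ℕ → α), ∃ y, P n y ∧ ∀ m < n, r m (s m) y) :
    ∃ f : ℕ → α, (∀ n, P n (f n)) ∧ ∀ n, ∀ m < n, r m (f m) (f n) := by
  classical
  choose next hP hr using h
  let f : ℕ → α := Nat.strongRec fun n f =>
    next n fun m => if hm : m < n then f m hm else Classical.arbitrary α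
  have hf (n : ℕ) : f n = next n fun m => if m < n then f m else Classical.arbitrary α :=
    Nat.strongRec_eq _ n
  refine ⟨f, fun n => (hf n).symm ▸ hP n _, fun n m hm => ?_⟩
  have hrm := hr n (fun m => if m < n then f m else Classical.arbitrary α) m hm
  rwa [if_pos hm, ← hf n] at hrm

theorem exists_strictMono_of_mem_ultrafilter {U : Ultrafilter ℕ} (hU : (U : Filter ℕ) ≤ .atTop)
    {D : ℕ → ℕ → Set ℕ} (hD : ∀ i m, D i m ∈ U) (t : ℕ → ℕ → ℕ) (base : ℕ → ℕ) :
    ∃ M φ : ℕ → ℕ, StrictMono M ∧ StrictMono φ ∧ (∀ n, t n (φ n) ≤ M (n + 1)) ∧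
      (∀ n, ∀ i ≤ n, φ n ∈ D i (M i)) ∧ ∀ n, base n ≤ M n := by
  obtain ⟨f, hP, hr⟩ := exists_seq_of_forall_exists (α := ℕ × ℕ)
    (P := fun n y => y.2 ∈ D n y.1 ∧ base n ≤ y.1)
    (r := fun m s y => s.1 < y.1 ∧ s.2 < y.2 ∧ t m s.2 ≤ y.1 ∧ y.2 ∈ D m s.1) fun n s => by
      let M := base n + ∑ m ∈ Finset.range n, ((s m).1 + 1 + t m (s m).2)
      have hM : ∀ m < n, (s m).1 < M ∧ t m (s m).2 ≤ M := fun m hm => by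
        have := Finset.single_le_sum (f := fun m => (s m).1 + 1 + t m (s m).2)
          (fun _ _ => Nat.zero_le _) (Finset.mem_range.mpr hm)
        simp only [M]
        omega
      have hpast : ∀ᶠ k in (U : Filter ℕ),
          ∀ m ∈ Finset.range n, (s m).2 < k ∧ k ∈ D m (s m).1 :=
        (Filter.eventually_all_finset _).mpr fun m _ =>
          Filter.Eventually.and (hU (Filter.eventually_gt_atTop (s m).2)) (hD m (s m).1)
      obtain ⟨k, hk, hkn⟩ := (hpast.and (hD n M)).exists
      refine ⟨(M, k), ⟨hkn, Nat.le_add_right _ _⟩, fun m hm => ?_⟩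
      obtain ⟨hlt, hmem⟩ := hk m (Finset.mem_range.mpr hm)
      exact ⟨(hM m hm).1, hlt, (hM m hm).2, hmem⟩
  refine ⟨fun n => (f n).1, fun n => (f n).2, fun m n h => (hr n m h).1,
    fun m n h => (hr n m h).2.1, fun n => (hr _ n n.lt_succ_self).2.2.1, fun n i hi => ?_,
    fun n => (hP n).2⟩
  rcases hi.lt_or_eq with h | rfl
  · exact (hr n i h).2.2.2
  · exact (hP i).1

theorem dominatesBad_of_subsingleton {N : c00 → ℝ} (hN : IsNormC00 N) {u : ℕ → c00}
    {p M W : ℕ → ℕ} (hp : Monotone p) (hu : ∀ i, (u i).support ⊆ block p i) (hu1 : ∀ i, N (u i) = 1)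
    (hW : ∀ i, 1 ≤ W i) (hbad : ∀ l, {i | IsBad N M u l i}.Subsingleton) (a : ℕ →₀ ℝ) :
    DominatesBad N 1 p u M W a := by
  intro l J hJ
  rcases J.eq_empty_or_nonempty with rfl | ⟨i, hi⟩
  · exact ⟨∅, [], .nil, by simp [Config.value_nil]⟩
  obtain rfl : J = {i} := Finset.eq_singleton_iff_unique_mem.mpr
    ⟨hi, fun j hj => hbad l (hJ j hj) (hJ i hi)⟩
  have hne : (u i).support.Nonempty := Finsupp.support_nonempty_iff.mpr fun h => by
    simpa [h, hN.map_zero] using hu1 i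
  refine ⟨_, _, .singleton hN le_rfl hp hne subset_rfl hi (hu i) (hW i), ?_⟩
  rw [Finset.sum_singleton, Config.value_singleton, one_mul, proj_sum_support_smul hp hu a (hu i),
    proj_eq_self subset_rfl, hN.map_smul, hu1, mul_one]

namespace Config.IsControlled

variable {N : c00 → ℝ} {C : ℝ} {p b : ℕ → ℕ} {E : Finset ℕ} {n : ℕ}

theorem exists_value_eq_mul_normSum (hN : IsNormC00 N) (hC : 0 ≤ C) {i : ℕ}
    (hE : block p i ⊆ E) {L : List (Finset ℕ)} (hL : IsSuccessive L) (hn : L.length ≤ n)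
    (hb : n ≤ b i) :
    ∃ c : Config, c.IsControlled N C p {i} E b n ∧
      ∀ x, c.value N x = C * normSum N L (proj (block p i) x) := by
  let K := (L.map (· ∩ block p i)).filter (·.Nonempty)
  have hK : ∀ F ∈ K, F.Nonempty ∧ F ⊆ block p i := fun F hF => by
    obtain ⟨hFL, hne⟩ := List.mem_filter.mp hF
    obtain ⟨G, -, rfl⟩ := List.mem_map.mp hFL
    exact ⟨of_decide_eq_true hne, Finset.inter_subset_right⟩
  have hKn : K.length ≤ n := (List.length_filter_le _ _).trans ((List.length_map _).trans_le hn)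
  let c : Config := K.map (·, C)
  have hsets : c.sets = K := by simp [c, sets, Function.comp_def]
  have hweights : c.weights = List.replicate K.length C := by
    simp [c, weights, Function.comp_def]
  refine ⟨c, ⟨?_, ?_, ?_, ?_, ?_, ?_, ?_⟩, fun x => ?_⟩
  · rw [hweights]
    exact (IsAdmissible.replicate hN le_rfl _).mono hKn
  · rw [hsets]
    exact (hL.map_inter _).filter _
  · rw [hweights]
    exact fun w hw => (List.eq_of_mem_replicate hw).symm ▸ hC
  · rw [hsets]
    exact fun F hF => (hK F hF).1
  · rw [hsets]
    exact fun F hF => .of_subset ((hK F hF).2.trans hE)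
  · rw [hsets]
    exact fun F hF => ⟨i, Finset.mem_singleton_self i, (hK F hF).2⟩
  · intro j hj
    rw [Finset.mem_singleton.mp hj, count, hsets]
    exact List.countP_le_length.trans (hKn.trans hb)
  · rw [← normSum_map_inter, ← hN.normSum_filter_nonempty]
    simp only [c, K, value, normSum, List.map_map, Function.comp_def, List.sum_map_mul_left]

theorem exists_sum_le_value (hp : Monotone p) {x : c00} {t : ℕ → ℝ} (J : Finset ℕ)
    (h : ∀ i ∈ J, ∃ c : Config, c.IsControlled N C p {i} E b n ∧ t i ≤ c.value N x) :
    ∃ c : Config, c.IsControlled N C p J E b (J.card * n) ∧ ∑ i ∈ J, t i ≤ c.value N x := by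
  induction J using Finset.induction_on_max with
  | empty => exact ⟨[], .nil, by simp [value_nil]⟩
  | insert j J hj ih =>
    have hjJ : j ∉ J := fun hmem => lt_irrefl j (hj j hmem)
    obtain ⟨c, hc, hle⟩ := ih fun i hi => h i (Finset.mem_insert_of_mem hi)
    obtain ⟨c', hc', hle'⟩ := h j (Finset.mem_insert_self j J)
    refine ⟨c ++ c', ?_, ?_⟩
    · have := hc.append_of_lt hc' hp fun i hi k hk =>
        (hj i hi).trans_eq (Finset.mem_singleton.mp hk).symm
      rwa [Finset.union_comm, ← Finset.insert_eq, ← Nat.succ_mul, Nat.succ_eq_add_one,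
        ← Finset.card_insert_of_notMem hjJ] at this
    · rw [Finset.sum_insert hjJ, value_append, add_comm]
      exact add_le_add hle hle'

end Config.IsControlled

/-- All members of `J` have a large `l`-average; averaging these families over `l ^ 2` sets costs
only a factor `2`, as `f (l ^ 2) ≤ 2 f l`. -/
theorem exists_isControlled_sum_abs_le {N : c00 → ℝ} (hN : IsSchlumprechtNorm N) {u : ℕ → c00}
    {p W : ℕ → ℕ} (hp : Monotone p) (hu : ∀ i, (u i).support ⊆ block p i) (a : ℕ →₀ ℝ) {C θ : ℝ}
    (hC : 0 ≤ C) (hCθ : 2 ≤ C * θ) {l : ℕ} (hl : 2 ≤ l) {J : Finset ℕ} (hJ : J.card ≤ l)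
    (hW : ∀ i ∈ J, l ≤ W i) (hlarge : ∀ i ∈ J, HasLargeAverage N (u i) l θ) :
    ∃ (E : Finset ℕ) (c : Config), c.IsControlled N C p J E W 1 ∧
      ∑ i ∈ J, |a i| ≤ c.value N (∑ i ∈ a.support, a i • u i) := by
  have hf := flog_pos hl
  have hrow : ∀ i ∈ J, ∃ c : Config, c.IsControlled N C p {i} (J.biUnion (block p)) W l ∧
      C * θ * flog l * |a i| ≤ c.value N (∑ i ∈ a.support, a i • u i) := fun i hi => by
    obtain ⟨L, hL, hlen, hlt⟩ := hlarge i hi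
    obtain ⟨c, hc, hval⟩ := Config.IsControlled.exists_value_eq_mul_normSum hN.1 hC
      (Finset.subset_biUnion_of_mem (block p) hi) hL hlen (hW i hi)
    refine ⟨c, hc, ?_⟩
    rw [hval, proj_sum_support_smul hp hu a subset_rfl, proj_eq_self (hu i), hN.1.normSum_smul]
    calc C * θ * flog l * |a i| = C * (|a i| * (θ * flog l)) := by ring
      _ ≤ C * (|a i| * normSum N L (u i)) := by gcongr
  obtain ⟨c, hc, hle⟩ := Config.IsControlled.exists_sum_le_value hp J hrow
  have hll : 2 ≤ l * l := by nlinarith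
  refine ⟨_, _, (hc.mono hp subset_rfl hc.inHull (fun _ _ => le_rfl)
    (Nat.mul_le_mul_right l hJ)).scale hN hC hll, ?_⟩
  rw [Config.value_scale, inv_mul_eq_div, le_div_iff₀ (flog_pos hll)]
  rw [← Finset.mul_sum] at hle
  have : 0 ≤ ∑ i ∈ J, |a i| := Finset.sum_nonneg fun _ _ => abs_nonneg _
  calc (∑ i ∈ J, |a i|) * flog (l * l : ℕ) ≤ (∑ i ∈ J, |a i|) * (2 * flog l) := by
        gcongr
        linarith [flog_mul_le l l]
    _ = 2 * (flog l * ∑ i ∈ J, |a i|) := by ring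
    _ ≤ C * θ * (flog l * ∑ i ∈ J, |a i|) := by gcongr
    _ ≤ _ := by linarith

theorem dominatesBad_of_hasLargeAverage {N : c00 → ℝ} (hN : IsSchlumprechtNorm N) {u : ℕ → c00}
    {p M W : ℕ → ℕ} (hp : Monotone p) (hu : ∀ i, (u i).support ⊆ block p i) {θ : ℝ} (hθ : 0 < θ)
    {ell : ℕ → ℕ} (hell : ∀ m, m + 2 ≤ ell m) (hW : ∀ m i, m ≤ i → ell m ≤ W i)
    (hlarge : ∀ m i, m ≤ i → HasLargeAverage N (u i) (ell m) θ)
    (hbad : ∀ l i i', IsBad N M u l i → IsBad N M u l i' → i' ≤ 2 * i + 1) (a : ℕ →₀ ℝ) :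
    DominatesBad N (max 1 (2 / θ)) p u M W a := by
  intro l J hJ
  rcases J.eq_empty_or_nonempty with rfl | hne
  · exact ⟨∅, [], .nil, by simp [Config.value_nil]⟩
  set m := J.min' hne
  have hmJ : ∀ i ∈ J, m ≤ i := fun i hi => J.min'_le i hi
  have hsub : J ⊆ Finset.Icc m (2 * m + 1) := fun i hi =>
    Finset.mem_Icc.mpr ⟨hmJ i hi, hbad l m i (hJ m (J.min'_mem hne)) (hJ i hi)⟩
  have hcard := Finset.card_le_card hsub
  have hm := hell m
  rw [Nat.card_Icc] at hcard
  exact exists_isControlled_sum_abs_le hN hp hu a (zero_le_one.trans (le_max_left _ _))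
    ((div_le_iff₀ hθ).mp (le_max_right _ _)) (by omega) (by omega)
    (fun i hi => hW m i (hmJ i hi)) fun i hi => hlarge m i (hmJ i hi)

/-- A sequence `y` with thresholds `M` and allowances `W` such that the `l`-averages of `y n` are
negligible once `l` reaches the next threshold, and such that from the `i`-th vector on all vectors
look alike on families of `2 i (W i) + 1` sets. -/
structure IsStabilized (N : c00 → ℝ) (M W : ℕ → ℕ) (y : ℕ → c00) : Prop where
  strictMono : StrictMono M
  le_flog : (208 : ℝ) ^ 2 ≤ flog (M 0)
  pow_four_le : ∀ i, M i ^ 4 ≤ W i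
  not_hasLargeAverage : ∀ n l, M (n + 1) ≤ l → ¬HasLargeAverage N (y n) l ((2 / 3) ^ n)
  hasCounterparts : ∀ i n n', i ≤ n → i ≤ n' →
    HasCounterparts N (2 * i * W i + 1) ((1 / 2) ^ i / (2 * i * W i + 1 : ℕ)) (y n) (y n')

/-- Simultaneously bad vectors are dominated by configurations in every subsequence `y ∘ α` which
does not leave out too much. -/
def DominatesBadAlong (N : c00 → ℝ) (C : ℝ) (M W : ℕ → ℕ) (y : ℕ → c00) : Prop :=
  ∀ α : ℕ → ℕ, StrictMono α → (∀ i, α i ≤ 2 * i + 1) → ∀ p : ℕ → ℕ, Monotone p →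
    (∀ i, (y (α i)).support ⊆ block p i) → ∀ a, DominatesBad N C p (y ∘ α) M W a

theorem exists_isStabilized {N : c00 → ℝ} (hN : IsSchlumprechtNorm N) {U : Ultrafilter ℕ}
    (hU : (U : Filter ℕ) ≤ .atTop) {x : ℕ → c00} (hx : ∀ n, N (x n) ≤ 1) {w : ℕ → ℕ → ℕ}
    (hw : ∀ i m, m ^ 4 ≤ w i m) {D : ℕ → ℕ → Set ℕ} (hD : ∀ i m, D i m ∈ U) (base : ℕ → ℕ) :
    ∃ M φ : ℕ → ℕ, StrictMono φ ∧ IsStabilized N M (fun i => w i (M i)) (x ∘ φ) ∧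
      (∀ n, ∀ i ≤ n, φ n ∈ D i (M i)) ∧ ∀ n, base n ≤ M n := by
  choose A hA hmatch using fun i m => exists_mem_ultrafilter_hasCounterparts hN U hx
    (2 * i * w i m + 1) (ε := (1 / 2) ^ i / (2 * i * w i m + 1 : ℕ)) (by positivity)
  choose t ht using fun n k => Filter.eventually_atTop.mp
    (eventually_not_hasLargeAverage hN (x k) (θ := (2 / 3) ^ n) (by positivity))
  obtain ⟨b, hb⟩ := (tendsto_flog_natCast.eventually_ge_atTop ((208 : ℝ) ^ 2)).exists
  obtain ⟨M, φ, hM, hφ, hnext, hmem, hbase⟩ := exists_strictMono_of_mem_ultrafilter hU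
    (fun i m => Filter.inter_mem (hA i m) (hD i m)) t (fun n => max b (base n))
  exact ⟨M, φ, hφ,
    { strictMono := hM
      le_flog := hb.trans (flog_natCast_mono ((le_max_left _ _).trans (hbase 0)))
      pow_four_le := fun i => hw i (M i)
      not_hasLargeAverage := fun n l hl => ht n (φ n) l ((hnext n).trans hl)
      hasCounterparts := fun i n n' hn hn' =>
        hmatch i (M i) _ (hmem n i hn).1 _ (hmem n' i hn').1 },
    fun n i hi => (hmem n i hi).2, fun n => (le_max_right _ _).trans (hbase n)⟩

theorem IsStabilized.lt_of_isBad {N : c00 → ℝ} {M W : ℕ → ℕ} {y : ℕ → c00}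
    (h : IsStabilized N M W y) {α : ℕ → ℕ} (hα : StrictMono α) {l i : ℕ}
    (hbad : IsBad N M (y ∘ α) l i) : l < M (α i + 1) := by
  by_contra! hl
  exact h.not_hasLargeAverage (α i) l hl (hbad.2.mono
    (pow_le_pow_of_le_one (by norm_num) (by norm_num) hα.le_apply))

theorem exists_dominatesBadAlong_of_frequently {N : c00 → ℝ} (hN : IsSchlumprechtNorm N)
    {U : Ultrafilter ℕ} (hU : (U : Filter ℕ) ≤ .atTop) {x : ℕ → c00} (hx : ∀ n, N (x n) ≤ 1)
    {θ : ℝ} (hθ : 0 < θ)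
    (hlarge : ∃ᶠ l in .atTop, ∀ᶠ n in (U : Filter ℕ), HasLargeAverage N (x n) l θ) :
    ∃ φ M W : ℕ → ℕ, StrictMono φ ∧ IsStabilized N M W (x ∘ φ) ∧
      DominatesBadAlong N (max 1 (2 / θ)) M W (x ∘ φ) := by
  choose ell hell hU_ell using Filter.frequently_atTop.mp hlarge
  obtain ⟨M, φ, hφ, hstab, hmem, -⟩ := exists_isStabilized hN hU hx
    (w := fun i m => m ^ 4 + ∑ k ∈ Finset.range (i + 1), ell (k + 2))
    (fun i m => Nat.le_add_right _ _)
    (D := fun i _ => {n | HasLargeAverage N (x n) (ell (i + 2)) θ})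
    (fun i _ => hU_ell (i + 2)) 0
  refine ⟨φ, M, _, hφ, hstab, fun α hα hα2 p hp hsupp a =>
    dominatesBad_of_hasLargeAverage hN hp hsupp hθ (fun m => hell (m + 2)) (fun m i hmi => ?_)
      (fun m i hmi => hmem (α i) m (hmi.trans hα.le_apply)) (fun l i i' hi hi' => ?_) a⟩
  · exact le_add_left (Finset.single_le_sum (f := fun k => ell (k + 2))
      (fun _ _ => Nat.zero_le _) (Finset.mem_range_succ_iff.mpr hmi))
  · have hlt := hstab.strictMono.lt_iff_lt.mp (hi'.1.trans_lt (hstab.lt_of_isBad hα hi))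
    have := hα2 i
    omega

theorem exists_dominatesBadAlong_of_eventually {N : c00 → ℝ} (hN : IsSchlumprechtNorm N)
    {U : Ultrafilter ℕ} (hU : (U : Filter ℕ) ≤ .atTop) {x : ℕ → c00} (hx : ∀ n, N (x n) = 1)
    (hsmall : ∀ θ > 0, ∀ᶠ l in .atTop, ∀ᶠ n in (U : Filter ℕ), ¬HasLargeAverage N (x n) l θ) :
    ∃ φ M W : ℕ → ℕ, StrictMono φ ∧ IsStabilized N M W (x ∘ φ) ∧
      DominatesBadAlong N 1 M W (x ∘ φ) := by
  choose m hm using fun i : ℕ => Filter.eventually_atTop.mp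
    (hsmall ((2 / 3) ^ i) (by positivity))
  obtain ⟨M, φ, hφ, hstab, hmem, hbase⟩ := exists_isStabilized hN hU (fun n => (hx n).le)
    (w := fun _ k => k ^ 4) (fun _ _ => le_rfl)
    (D := fun n k => {j | ∀ i ∈ Finset.range (n + 1), ∀ l ∈ Finset.Ico (m i) k,
      ¬HasLargeAverage N (x j) l ((2 / 3) ^ i)})
    (fun n k => (Filter.eventually_all_finset _).mpr fun i _ =>
      (Filter.eventually_all_finset _).mpr fun l hl => hm i l (Finset.mem_Ico.mp hl).1) m
  have hMpos (i : ℕ) : 1 ≤ M i := Nat.one_le_iff_ne_zero.mpr fun h => by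
    have hM0 : M 0 = 0 := Nat.le_zero.mp ((hstab.strictMono.monotone i.zero_le).trans_eq h)
    have := hstab.le_flog
    norm_num [hM0, flog] at this
  refine ⟨φ, M, _, hφ, hstab, fun α hα _ p hp hsupp a => dominatesBad_of_subsingleton hN.1 hp hsupp
    (fun i => hx _) (fun i => Nat.one_le_pow _ _ (hMpos i)) (fun l i hi i' hi' => ?_) a⟩
  have hle {i : ℕ} (hi : IsBad N M ((x ∘ φ) ∘ α) l i) : M (α i) ≤ l := by
    by_contra! hl
    exact hmem (α i) (α i) le_rfl i (Finset.mem_range_succ_iff.mpr hα.le_apply) l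
      (Finset.mem_Ico.mpr ⟨(hbase i).trans hi.1, hl⟩) hi.2
  have hlt := hstab.strictMono.lt_iff_lt.mp ((hle hi).trans_lt (hstab.lt_of_isBad hα hi'))
  have hlt' := hstab.strictMono.lt_iff_lt.mp ((hle hi').trans_lt (hstab.lt_of_isBad hα hi))
  exact hα.injective (by omega)

theorem exists_dominatesBadAlong {N : c00 → ℝ} (hN : IsSchlumprechtNorm N) {x : ℕ → c00}
    (hx : ∀ n, N (x n) = 1) :
    ∃ (φ M W : ℕ → ℕ) (C : ℝ), 1 ≤ C ∧ StrictMono φ ∧ IsStabilized N M W (x ∘ φ) ∧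
      DominatesBadAlong N C M W (x ∘ φ) := by
  have hU := Nat.hyperfilter_le_atTop
  by_cases h : ∃ θ > 0, ∃ᶠ l in .atTop, ∀ᶠ n in (Filter.hyperfilter ℕ : Filter ℕ),
      HasLargeAverage N (x n) l θ
  · obtain ⟨θ, hθ, hlarge⟩ := h
    obtain ⟨φ, M, W, h⟩ :=
      exists_dominatesBadAlong_of_frequently hN hU (fun n => (hx n).le) hθ hlarge
    exact ⟨φ, M, W, _, le_max_left _ _, h⟩
  · have hsmall : ∀ θ > 0, ∀ᶠ l in .atTop, ∀ᶠ n in (Filter.hyperfilter ℕ : Filter ℕ),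
        ¬HasLargeAverage N (x n) l θ := by
      simpa only [not_exists, not_and, Filter.not_frequently, Ultrafilter.eventually_not] using h
    obtain ⟨φ, M, W, h⟩ := exists_dominatesBadAlong_of_eventually hN hU hx hsmall
    exact ⟨φ, M, W, 1, le_rfl, h⟩

namespace IsBlockSeq

variable {x : ℕ → c00} (hx : IsBlockSeq x)

include hx

theorem flt_support {m n : ℕ} (h : m < n) : FLt (x m).support (x n).support := by
  induction n, h using Nat.le_induction with
  | base => exact hx.2 m
  | succ n _ ih =>
    intro i hi j hj
    obtain ⟨k, hk⟩ := Finsupp.support_nonempty_iff.mpr (hx.1 n)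
    exact (ih i hi k hk).trans (hx.2 n k hk j hj)

theorem disjoint_support {m n : ℕ} (h : m ≠ n) : Disjoint (x m).support (x n).support := by
  rcases h.lt_or_gt with h | h
  · exact (hx.flt_support h).disjoint
  · exact (hx.flt_support h).disjoint.symm

theorem comp_strictMono {φ : ℕ → ℕ} (hφ : StrictMono φ) : IsBlockSeq (x ∘ φ) :=
  ⟨fun n => hx.1 (φ n), fun n => hx.flt_support (hφ n.lt_succ_self)⟩

theorem exists_support_subset_block :
    ∃ p : ℕ → ℕ, Monotone p ∧ ∀ i, (x i).support ⊆ block p i := by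
  have hne i : (x i).support.Nonempty := Finsupp.support_nonempty_iff.mpr (hx.1 i)
  have hmem i := Finset.min'_mem _ (hne i)
  exact ⟨fun i => (x i).support.min' (hne i),
    monotone_nat_of_le_succ fun i => (hx.2 i _ (hmem i) _ (hmem (i + 1))).le,
    fun i k hk => mem_block.mpr ⟨Finset.min'_le _ _ hk, hx.2 i k hk _ (hmem (i + 1))⟩⟩

end IsBlockSeq

theorem IsStabilized.norm_sum_comp_le {N : c00 → ℝ} (hN : IsSchlumprechtNorm N) {C : ℝ}
    (hC : 1 ≤ C) {M W : ℕ → ℕ} {y : ℕ → c00} (h : IsStabilized N M W y)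
    (hbad : DominatesBadAlong N C M W y) (hy : IsBlockSeq y) (hy1 : ∀ n, N (y n) = 1)
    {α β : ℕ → ℕ} (hα : StrictMono α) (hβ : StrictMono β) (hα2 : ∀ i, α i ≤ 2 * i + 1)
    (a : ℕ →₀ ℝ) :
    N (a.sum fun i t => t • y (α i)) ≤ (15 * C + 6) * N (a.sum fun i t => t • y (β i)) := by
  obtain ⟨p, hp, hsupp⟩ := (hy.comp_strictMono hα).exists_support_subset_block
  obtain ⟨p', hp', hsupp'⟩ := (hy.comp_strictMono hβ).exists_support_subset_block
  let S : BlockCombination N :=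
    { C := C, one_le_C := hC, u := y ∘ α, p := p, monotone_p := hp, support_subset := hsupp
      norm_le_one := fun i => (hy1 _).le, M := M, W := W, strictMono_M := h.strictMono
      le_flog_M := h.le_flog, pow_four_le_W := h.pow_four_le, a := a
      dominatesBad := hbad α hα hα2 p hp hsupp a }
  exact S.norm_le hN hp' hsupp' (fun i => hy1 _) (fun i => by positivity)
    (fun i => (mul_div_cancel₀ _ (by positivity)).le)
    (fun i => h.hasCounterparts i _ _ hα.le_apply hβ.le_apply)

/-! ### Isomorphism with the square -/

theorem SeqEquiv.of_le {N : c00 → ℝ} {u v : ℕ → c00} {C : ℝ} (hC : 1 ≤ C)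
    (h₁ : ∀ a : ℕ →₀ ℝ, N (a.sum fun i t => t • u i) ≤ C * N (a.sum fun i t => t • v i))
    (h₂ : ∀ a : ℕ →₀ ℝ, N (a.sum fun i t => t • v i) ≤ C * N (a.sum fun i t => t • u i)) :
    SeqEquiv N u v := by
  refine ⟨C, hC, fun a => ⟨?_, h₂ a⟩⟩
  rw [one_div, inv_mul_le_iff₀ (zero_lt_one.trans_le hC)]
  exact h₁ a

theorem IsStabilized.seqEquiv_comp {N : c00 → ℝ} (hN : IsSchlumprechtNorm N) {C : ℝ}
    (hC : 1 ≤ C) {M W : ℕ → ℕ} {y : ℕ → c00} (h : IsStabilized N M W y)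
    (hbad : DominatesBadAlong N C M W y) (hy : IsBlockSeq y) (hy1 : ∀ n, N (y n) = 1)
    {α β : ℕ → ℕ} (hα : StrictMono α) (hβ : StrictMono β) (hα2 : ∀ i, α i ≤ 2 * i + 1)
    (hβ2 : ∀ i, β i ≤ 2 * i + 1) :
    SeqEquiv N (fun i => y (α i)) (fun i => y (β i)) :=
  .of_le (by linarith) (h.norm_sum_comp_le hN hC hbad hy hy1 hα hβ hα2)
    (h.norm_sum_comp_le hN hC hbad hy hy1 hβ hα hβ2)

/-- The linear splitting of a finitely supported sequence into its even and its odd part. -/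
noncomputable def evenOddEquiv (𝕜 : Type*) [Semiring 𝕜] :
    (ℕ →₀ 𝕜) ≃ₗ[𝕜] (ℕ →₀ 𝕜) × (ℕ →₀ 𝕜) :=
  Finsupp.domLCongr Equiv.natSumNatEquivNat.symm ≪≫ₗ Finsupp.sumFinsuppLEquivProdFinsupp 𝕜

theorem linearCombination_evenOddEquiv_symm {𝕜 E : Type*} [Semiring 𝕜] [AddCommMonoid E]
    [Module 𝕜 E] (z : ℕ → E) (a b : ℕ →₀ 𝕜) :
    Finsupp.linearCombination 𝕜 z ((evenOddEquiv 𝕜).symm (a, b)) =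
      Finsupp.linearCombination 𝕜 (fun n => z (2 * n)) a +
        Finsupp.linearCombination 𝕜 (fun n => z (2 * n + 1)) b := by
  have hsum : (evenOddEquiv 𝕜).symm (a, b) =
      Finsupp.equivMapDomain Equiv.natSumNatEquivNat (Finsupp.sumElim a b) := rfl
  rw [hsum, Finsupp.linearCombination_equivMapDomain]
  simp only [Finsupp.linearCombination_apply]
  exact Finsupp.sum_sumElim a b _

theorem nonempty_topologicalClosure_span_equiv_prod {𝕜 E : Type*} [NontriviallyNormedField 𝕜]
    [NormedAddCommGroup E] [NormedSpace 𝕜 E] [CompleteSpace E] (z : ℕ → E) {C C' : ℝ}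
    (hC : ∀ a b : ℕ →₀ 𝕜,
      max ‖Finsupp.linearCombination 𝕜 z a‖ ‖Finsupp.linearCombination 𝕜 z b‖ ≤
        C * ‖Finsupp.linearCombination 𝕜 (fun n => z (2 * n)) a +
          Finsupp.linearCombination 𝕜 (fun n => z (2 * n + 1)) b‖)
    (hC' : ∀ a b : ℕ →₀ 𝕜,
      ‖Finsupp.linearCombination 𝕜 (fun n => z (2 * n)) a +
          Finsupp.linearCombination 𝕜 (fun n => z (2 * n + 1)) b‖ ≤
        C' * max ‖Finsupp.linearCombination 𝕜 z a‖ ‖Finsupp.linearCombination 𝕜 z b‖) :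
    Nonempty ((Submodule.span 𝕜 (Set.range z)).topologicalClosure ≃L[𝕜]
      (Submodule.span 𝕜 (Set.range z)).topologicalClosure ×
        (Submodule.span 𝕜 (Set.range z)).topologicalClosure) := by
  set V := Submodule.span 𝕜 (Set.range z) with hV
  have : CompleteSpace V.topologicalClosure := V.isClosed_topologicalClosure.completeSpace_coe
  have hrange : Set.range (Finsupp.linearCombination 𝕜 z) = V := by
    rw [hV, ← Finsupp.range_linearCombination, LinearMap.coe_range]
  let e : (ℕ →₀ 𝕜) →ₗ[𝕜] V.topologicalClosure :=
    (Finsupp.linearCombination 𝕜 z).codRestrict V.topologicalClosure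
      fun a => V.le_topologicalClosure (hrange.subset ⟨a, rfl⟩)
  have he : DenseRange e := by
    refine Subtype.dense_iff.mpr fun s hs => ?_
    rw [← Set.range_comp]
    exact hrange.symm ▸ hs
  refine ⟨(evenOddEquiv 𝕜).extend e (e.prodMap e) he ⟨C, fun a => ?_⟩ (he.prodMap he)
    ⟨C', fun ⟨a, b⟩ => ?_⟩⟩
  · obtain ⟨⟨a, b⟩, rfl⟩ := (evenOddEquiv 𝕜).symm.surjective a
    rw [LinearEquiv.apply_symm_apply]
    refine (hC a b).trans_eq ?_
    rw [← linearCombination_evenOddEquiv_symm]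
    rfl
  · refine Eq.trans_le ?_ (hC' a b)
    rw [← linearCombination_evenOddEquiv_symm]
    rfl

theorem IsSchlumprechtNorm.le_map_add_of_disjoint {N : c00 → ℝ} (hN : IsSchlumprechtNorm N)
    {v w : c00} (h : Disjoint v.support w.support) : N v ≤ N (v + w) := by
  have hle := hN.map_proj_le v.support (v + w)
  rwa [proj_add, proj_eq_self subset_rfl, proj_eq_zero fun k hk =>
    Finsupp.notMem_support_iff.mp (Finset.disjoint_left.mp h hk), add_zero] at hle

theorem IsBlockSeq.disjoint_support_sum_even_odd {y : ℕ → c00} (hy : IsBlockSeq y)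
    (a b : ℕ →₀ ℝ) : Disjoint (a.sum fun i t => t • y (2 * i)).support
      (b.sum fun i t => t • y (2 * i + 1)).support := by
  refine Disjoint.mono Finsupp.support_finsetSum Finsupp.support_finsetSum ?_
  simp only [Finset.disjoint_biUnion_left, Finset.disjoint_biUnion_right]
  exact fun i _ i' _ => (hy.disjoint_support (by omega)).mono
    Finsupp.support_smul Finsupp.support_smul

theorem IsBlockSeq.nonempty_closedSpan_equiv_prod {N : c00 → ℝ} (hN : IsSchlumprechtNorm N)
    {S : Type*} [NormedAddCommGroup S] [NormedSpace ℝ S] [CompleteSpace S] (j : c00 →ₗ[ℝ] S)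
    (hjn : ∀ v, ‖j v‖ = N v) {y : ℕ → c00} (hy : IsBlockSeq y)
    (heven : SeqEquiv N y fun n => y (2 * n)) (hodd : SeqEquiv N y fun n => y (2 * n + 1)) :
    Nonempty ((Submodule.span ℝ (Set.range fun n => j (y n))).topologicalClosure ≃L[ℝ]
      (Submodule.span ℝ (Set.range fun n => j (y n))).topologicalClosure ×
        (Submodule.span ℝ (Set.range fun n => j (y n))).topologicalClosure) := by
  obtain ⟨c, hc, hce⟩ := heven
  obtain ⟨d, hd, hdo⟩ := hodd
  have hlin (u : ℕ → c00) (a : ℕ →₀ ℝ) :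
      Finsupp.linearCombination ℝ (fun n => j (u n)) a = j (a.sum fun i t => t • u i) :=
    (Finsupp.apply_linearCombination ℝ j u a).symm
  have hle {r s t : ℝ} (hr : 1 ≤ r) (h : 1 / r * s ≤ t) : s ≤ r * t := by
    rwa [one_div, inv_mul_le_iff₀ (zero_lt_one.trans_le hr)] at h
  refine nonempty_topologicalClosure_span_equiv_prod (C := max c d) (C' := c + d) _
    (fun a b => ?_) (fun a b => ?_)
  all_goals
    simp only [hlin, ← map_add, hjn]
    have hdisj := hy.disjoint_support_sum_even_odd a b
  · refine max_le ((hle hc (hce a).1).trans ?_) ((hle hd (hdo b).1).trans ?_)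
    · exact mul_le_mul (le_max_left _ _) (hN.le_map_add_of_disjoint hdisj) (hN.1.nonneg _)
        (by positivity)
    · rw [add_comm (a.sum _)]
      exact mul_le_mul (le_max_right _ _) (hN.le_map_add_of_disjoint hdisj.symm) (hN.1.nonneg _)
        (by positivity)
  · rw [add_mul]
    refine (hN.1.add_le _ _).trans (add_le_add ((hce a).2.trans ?_) ((hdo b).2.trans ?_))
    · gcongr
      exact le_max_left _ _
    · gcongr
      exact le_max_right _ _

/-- Every normalized block sequence of the unit vector basis has a
subsequence `y` such that `(y_n)`, `(y_{2n})` and `(y_{2n+1})` are mutually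
equivalent; consequently the closed linear span `Y` of `(y_n)` in `S` is
isomorphic to its square `Y × Y`. -/
theorem subsequence_equivalent_to_even_and_odd_parts
    (N : c00 → ℝ) (hN : IsSchlumprechtNorm N)
    (S : Type*) [NormedAddCommGroup S] [NormedSpace ℝ S] [CompleteSpace S]
    (j : c00 →ₗ[ℝ] S) (hj : DenseRange ⇑j) (hjn : ∀ v : c00, ‖j v‖ = N v)
    (x : ℕ → c00) (hx : IsBlockSeq x) (hxn : ∀ n, N (x n) = 1) :
    ∃ φ : ℕ → ℕ, StrictMono φ ∧
      SeqEquiv N (fun n => x (φ n)) (fun n => x (φ (2 * n))) ∧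
      SeqEquiv N (fun n => x (φ n)) (fun n => x (φ (2 * n + 1))) ∧
      SeqEquiv N (fun n => x (φ (2 * n))) (fun n => x (φ (2 * n + 1))) ∧
      Nonempty
        (↥((Submodule.span ℝ (Set.range fun n => j (x (φ n)))).topologicalClosure) ≃L[ℝ]
          (↥((Submodule.span ℝ (Set.range fun n => j (x (φ n)))).topologicalClosure) ×
           ↥((Submodule.span ℝ (Set.range fun n => j (x (φ n)))).topologicalClosure))) := by
  obtain ⟨φ, M, W, C, hC, hφ, hstab, hbad⟩ := exists_dominatesBadAlong hN hxn
  have hy := hx.comp_strictMono hφ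
  have hequiv {α β : ℕ → ℕ} := hstab.seqEquiv_comp hN hC hbad hy (fun n => hxn (φ n))
    (α := α) (β := β)
  have hid : ∀ i, id i ≤ 2 * i + 1 := fun i => by dsimp only [id]; omega
  have heven : StrictMono fun n : ℕ => 2 * n := fun m n h => by dsimp only; omega
  have hodd : StrictMono fun n : ℕ => 2 * n + 1 := fun m n h => by dsimp only; omega
  have hle : ∀ i, 2 * i ≤ 2 * i + 1 := fun i => Nat.le_succ _
  have hy_even := hequiv strictMono_id heven hid hle
  have hy_odd := hequiv strictMono_id hodd hid fun _ => le_rfl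
  exact ⟨φ, hφ, hy_even, hy_odd, hequiv heven hodd hle fun _ => le_rfl,
    hy.nonempty_closedSpan_equiv_prod hN j hjn hy_even hy_odd⟩
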